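/- arXiv:1504.06748 — 3 statements merged into one kernel-verified Lean document; each statement's English description precedes it below -/
import Mathlib

section
/- Let U = {(a_i, b_i) : i = 0, 1, ..., q-1} be a set of q points of AG(2,q), fix the point R = (a_0, b_0) ∈ U, and define the polynomial f(Y) = ∏_{i=1}^{q-1} ((a_i − a_0)Y − (b_i − b_0)) ∈ GF(q)[Y]. Then for every m ∈ GF(q): (a) the line through R with direction (m) meets U in exactly k_m points if and only if m is a root of f of multiplicity exactly k_m − 1; (b) if (m) is not a direction determined by U, then f(m) = −1; (c) if (∞) is not a direction determined by U, then the coefficient of Y^{q-1} in f equals −1. -/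
open Polynomial

/-!
The factor of `f` coming from a point `P ≠ R` is a nonzero polynomial of degree at most one, and it
vanishes at `m` exactly when `P` lies on the line of slope `m` through `R`. Each such point
therefore contributes one to the multiplicity of `m` as a root of `f`.

The value of `f` at `m` and its coefficient of degree `q - 1` are products of differences
`g P - g R`, with `g (x, y) = m * x - y` and `g (x, y) = x` respectively. The lines of the
corresponding direction are the fibres of `g`, so if the direction is not determined by `U`, then
`g` is injective on `U`, the differences run over all nonzero elements of the field, and their
product is `-1` by Wilson's theorem.
-/

section WilsonProduct

variable {F : Type*} [Field F] [Fintype F]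

theorem prod_univ_erase_zero_eq_neg_one [DecidableEq F] :
    ∏ x ∈ Finset.univ.erase (0 : F), x = -1 := by
  have hunits : ∏ x : Fˣ, (x : F) = ∏ x ∈ Finset.univ.erase (0 : F), x :=
    Finset.prod_nbij (fun x : Fˣ => (x : F)) (by simp) Units.val_injective.injOn
      (fun x hx => ⟨Units.mk0 x (Finset.ne_of_mem_erase hx), by simp⟩) fun _ _ => rfl
  rw [← hunits, ← Units.coe_prod, FiniteField.prod_univ_units_id_eq_neg_one, Units.val_neg,
    Units.val_one]

theorem prod_erase_sub_eq_neg_one_of_injOn {α : Type*} [DecidableEq α] {s : Finset α}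
    (hs : s.card = Fintype.card F) {a : α} (ha : a ∈ s) {g : α → F} (hg : Set.InjOn g s) :
    ∏ x ∈ s.erase a, (g x - g a) = -1 := by
  classical
  have hmaps : Set.MapsTo (fun x => g x - g a) (s.erase a) (Finset.univ.erase (0 : F)) := by
    intro x hx
    obtain ⟨hne, hxs⟩ := Finset.mem_erase.mp hx
    simpa [sub_eq_zero] using hg.ne hxs ha hne
  have hinj : Set.InjOn (fun x => g x - g a) (s.erase a) := fun x hx y hy hxy =>
    hg (Finset.mem_of_mem_erase hx) (Finset.mem_of_mem_erase hy) (sub_left_injective hxy)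
  have hcard : (Finset.univ.erase (0 : F)).card ≤ (s.erase a).card := by
    rw [Finset.card_erase_of_mem ha, Finset.card_erase_of_mem (Finset.mem_univ _), hs,
      Finset.card_univ]
  have hsurj := Finset.surjOn_of_injOn_of_card_le _ hmaps hinj hcard
  exact (Finset.prod_nbij _ hmaps hinj hsurj fun _ _ => rfl).trans prod_univ_erase_zero_eq_neg_one

end WilsonProduct

theorem C_mul_X_sub_C_eq_zero_iff {A : Type*} [Ring A] {a b : A} :
    C a * X - C b = 0 ↔ a = 0 ∧ b = 0 := by
  refine ⟨fun h => ⟨?_, ?_⟩, ?_⟩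
  · simpa [coeff_C] using congrArg (coeff · 1) h
  · simpa using congrArg (coeff · 0) h
  · rintro ⟨rfl, rfl⟩
    simp

section RootMultiplicity

variable {A : Type*} [CommRing A] [IsDomain A]

theorem rootMultiplicity_prod_eq_sum {ι : Type*} {s : Finset ι} {p : ι → A[X]}
    (hp : ∀ i ∈ s, p i ≠ 0) (m : A) :
    rootMultiplicity m (∏ i ∈ s, p i) = ∑ i ∈ s, rootMultiplicity m (p i) := by
  classical
  simp only [← count_roots, roots_prod p s (Finset.prod_ne_zero_iff.mpr hp), Multiset.count_bind,
    Finset.sum_map_val]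

theorem rootMultiplicity_C_mul_X_sub_C [DecidableEq A] {a b : A} (h : C a * X - C b ≠ 0) (m : A) :
    rootMultiplicity m (C a * X - C b) = if b = m * a then 1 else 0 := by
  split_ifs with hb
  · have hfactor : C a * X - C b = C a * (X - C m) := by
      rw [hb, C_mul]
      ring
    rw [hfactor] at h ⊢
    rw [rootMultiplicity_mul h, rootMultiplicity_C, rootMultiplicity_X_sub_C_self]
  · refine rootMultiplicity_eq_zero fun hroot => hb ?_
    simp only [IsRoot.def, eval_sub, eval_mul, eval_C, eval_X] at hroot
    linear_combination -hroot

end RootMultiplicity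

/-- The direction polynomial of the affine point set `U` seen from the point `R`. Over a field its
roots are the slopes of the non-vertical lines joining `R` to other points of `U`; the point `R`
itself is left out of the product because its factor would be zero. -/
noncomputable def directionPolynomial {A : Type*} [CommRing A] [DecidableEq A]
    (U : Finset (A × A)) (R : A × A) : A[X] :=
  ∏ P ∈ U.erase R, (C (P.1 - R.1) * X - C (P.2 - R.2))

namespace directionPolynomial

section CommRing

variable {A : Type*} [CommRing A] [DecidableEq A] (U : Finset (A × A)) (R : A × A)

theorem eval_eq_prod (m : A) :
    (directionPolynomial U R).eval m =
      ∏ P ∈ U.erase R, ((m * P.1 - P.2) - (m * R.1 - R.2)) := by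
  rw [directionPolynomial, eval_prod]
  refine Finset.prod_congr rfl fun P _ => ?_
  simp only [eval_sub, eval_mul, eval_C, eval_X]
  ring

theorem coeff_card_erase :
    (directionPolynomial U R).coeff (U.erase R).card = ∏ P ∈ U.erase R, (P.1 - R.1) := by
  have hdeg : ∀ P ∈ U.erase R, (C (P.1 - R.1) * X - C (P.2 - R.2)).natDegree ≤ 1 :=
    fun P _ => by compute_degree
  have hcoeff := coeff_prod_of_natDegree_le _ _ 1 hdeg
  rw [mul_one] at hcoeff
  rw [directionPolynomial, hcoeff]
  exact Finset.prod_congr rfl fun P _ => by simp [coeff_C]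

end CommRing

theorem card_filter_line_eq_rootMultiplicity_add_one {A : Type*} [CommRing A] [IsDomain A]
    [DecidableEq A] {U : Finset (A × A)} {R : A × A} (hR : R ∈ U) (m : A) :
    (U.filter fun P => P.2 - R.2 = m * (P.1 - R.1)).card =
      rootMultiplicity m (directionPolynomial U R) + 1 := by
  have hfactor : ∀ P ∈ U.erase R, C (P.1 - R.1) * X - C (P.2 - R.2) ≠ 0 := by
    intro P hP hzero
    obtain ⟨hx, hy⟩ := C_mul_X_sub_C_eq_zero_iff.mp hzero
    exact Finset.ne_of_mem_erase hP (Prod.ext (sub_eq_zero.mp hx) (sub_eq_zero.mp hy))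
  have hR_line : R ∈ U.filter fun P => P.2 - R.2 = m * (P.1 - R.1) := by simpa using hR
  rw [directionPolynomial, rootMultiplicity_prod_eq_sum hfactor,
    Finset.sum_congr rfl fun P hP => rootMultiplicity_C_mul_X_sub_C (hfactor P hP) m,
    ← Finset.card_filter, Finset.filter_erase, Finset.card_erase_add_one hR_line]

section FiniteField

variable {F : Type*} [Field F] [Fintype F] [DecidableEq F] {U : Finset (F × F)} {R : F × F}

theorem eval_eq_neg_one_of_injOn (hU : U.card = Fintype.card F) (hR : R ∈ U) {m : F}
    (hm : Set.InjOn (fun P : F × F => m * P.1 - P.2) U) :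
    (directionPolynomial U R).eval m = -1 :=
  (eval_eq_prod U R m).trans (prod_erase_sub_eq_neg_one_of_injOn hU hR hm)

theorem coeff_eq_neg_one_of_injOn_fst (hU : U.card = Fintype.card F) (hR : R ∈ U)
    (hfst : Set.InjOn Prod.fst (U : Set (F × F))) :
    (directionPolynomial U R).coeff (Fintype.card F - 1) = -1 := by
  rw [← hU, ← Finset.card_erase_of_mem hR, coeff_card_erase]
  exact prod_erase_sub_eq_neg_one_of_injOn hU hR hfst

end FiniteField

end directionPolynomial

/-- Let `U` be a set of `q` points of `AG(2,q)` (points are pairs in `F × F` where `F = GF(q)`),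
fix a point `R = (a₀, b₀) ∈ U`, and let
`f(Y) = ∏_{P ∈ U, P ≠ R} ((P.1 − a₀)·Y − (P.2 − b₀)) ∈ GF(q)[Y]`.
Then for every `m ∈ GF(q)`:
(a) the line through `R` with direction `(m)` meets `U` in exactly
    `rootMultiplicity m f + 1` points (i.e. it meets `U` in `k` points iff `m` is a root of `f`
    of multiplicity exactly `k − 1`);
(b) if the direction `(m)` is not determined by `U`, then `f(m) = −1`;
(c) if the vertical direction `(∞)` is not determined by `U` (i.e. no two distinct points of `U`
    share their first coordinate), then the coefficient of `Y^{q−1}` in `f` is `−1`. -/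
theorem stmt_0 {F : Type*} [Field F] [Fintype F] [DecidableEq F] (q : ℕ)
    (hq : Fintype.card F = q)
    (U : Finset (F × F)) (hU : U.card = q)
    (R : F × F) (hR : R ∈ U)
    (f : F[X])
    (hf : f = ∏ P ∈ U.erase R, (C (P.1 - R.1) * X - C (P.2 - R.2))) :
    (∀ m : F,
      (U.filter (fun P => P.2 - R.2 = m * (P.1 - R.1))).card = rootMultiplicity m f + 1) ∧
    (∀ m : F,
      (¬ ∃ P ∈ U, ∃ Q ∈ U, P ≠ Q ∧ P.2 - Q.2 = m * (P.1 - Q.1)) → f.eval m = -1) ∧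
    ((¬ ∃ P ∈ U, ∃ Q ∈ U, P ≠ Q ∧ P.1 = Q.1) → f.coeff (q - 1) = -1) := by
  subst hq hf
  refine ⟨directionPolynomial.card_filter_line_eq_rootMultiplicity_add_one hR,
    fun m hm => directionPolynomial.eval_eq_neg_one_of_injOn hU hR fun P hP Q hQ hPQ => ?_,
    fun hinf => directionPolynomial.coeff_eq_neg_one_of_injOn_fst hU hR fun P hP Q hQ hPQ => ?_⟩
  · by_contra hne
    exact hm ⟨P, hP, Q, hQ, hne, by linear_combination -hPQ⟩
  · by_contra hne
    exact hinf ⟨P, hP, Q, hQ, hne, hPQ⟩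
end

section
/- Let B be a blocking set of Rédei type in PG(2,q) with Rédei line ℓ. (1) If there is a point in B∖ℓ contained in exactly one bisecant of B, then |B ∩ ℓ| ≢ 1 (mod p). (2) If R₁, R₂ ∈ B∖ℓ are each contained in exactly one bisecant of B, and there is a point T ∈ ℓ such that both lines R₁T and R₂T meet B in at least four points, then for every M ∈ ℓ one has |MR₁ ∩ B| = |MR₂ ∩ B|. (3) If R₁, R₂ ∈ B∖ℓ are each contained in exactly one bisecant of B and the common point of these two bisecants lies on ℓ, then for every M ∈ ℓ one has |MR₁ ∩ B| = |MR₂ ∩ B|. -/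
/-! Common setup: the Desarguesian projective plane `PG(2,q)` over a finite field `F = GF(q)`.
Points are the projective points of `F³`; lines are the 2-dimensional linear subspaces of `F³`,
with incidence given by containment. -/

/-- Points of `PG(2,F)`. -/
abbrev PGPoint (F : Type*) [Field F] := Projectivization F (Fin 3 → F)

/-- Lines of `PG(2,F)`: the 2-dimensional linear subspaces of `F³`. -/
abbrev PGLine (F : Type*) [Field F] := {W : Submodule F (Fin 3 → F) // Module.finrank F W = 2}

/-- Incidence between a point and a line of `PG(2,F)`. -/
def pgMem {F : Type*} [Field F] (P : PGPoint F) (L : PGLine F) : Prop :=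
  P.submodule ≤ L.val

/-- The number of points of the point set `B` lying on the line `L`;
`L` is a *`k`-secant* of `B` if `nsec B L = k`, a *tangent* if `k = 1`,
a *bisecant* if `k = 2` and a *trisecant* if `k = 3`. -/
noncomputable def nsec {F : Type*} [Field F] (B : Set (PGPoint F)) (L : PGLine F) : ℕ :=
  {P ∈ B | pgMem P L}.ncard

/-- A blocking set: a point set meeting every line. -/
def isBlocking {F : Type*} [Field F] (B : Set (PGPoint F)) : Prop :=
  ∀ L : PGLine F, ∃ P ∈ B, pgMem P L

/-- A minimal blocking set: every point is essential. -/
def isMinimalBlocking {F : Type*} [Field F] (B : Set (PGPoint F)) : Prop :=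
  isBlocking B ∧ ∀ P ∈ B, ¬ isBlocking (B \ {P})

/-- `B` is a blocking set of Rédei type with Rédei line `ℓ`: a blocking set of size
`q + N ≤ 2q` such that `ℓ` meets `B` in exactly `N = |B| − q` points. -/
def isRedeiWithLine {F : Type*} [Field F] (q : ℕ) (B : Set (PGPoint F)) (ℓ : PGLine F) : Prop :=
  isBlocking B ∧ B.ncard ≤ 2 * q ∧ nsec B ℓ + q = B.ncard

/-- A semioval: through each of its points there passes exactly one tangent. -/
def isSemioval {F : Type*} [Field F] (S : Set (PGPoint F)) : Prop :=
  ∀ P ∈ S, ∃! t : PGLine F, pgMem P t ∧ nsec S t = 1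

/-! A Rédei type blocking set is, after a choice of coordinates with `ℓ` at infinity, the graph of a
function `f` together with the set `D` of its directions. The polynomial
`∏_{x ≠ a} (Y - (f x - f a) / (x - a))` encodes all secants through the point `R = (a, f a)`. It is
monic of degree `q - 1` and takes the value `1` off `D`, since the lines of slope `y ∉ D` each meet
the graph once; if only one bisecant passes through `R`, it vanishes on `D` except at the slope `d`
of this bisecant. As minus the sum of all values is the coefficient of `Y ^ (q - 1)`, the value at
`d` must be `|D| - 1`, which is therefore nonzero in `F`, and the polynomial depends only on `D` and
`d`. A secant with at least four points is a double root `t`, and the vanishing of the derivative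
at `t` expresses `(t - d)⁻¹` through `D` and `t` alone. -/

section Polynomial

open Polynomial

section FiniteField

variable {F : Type*} [Field F] [Fintype F]

theorem eval_one_sub_X_sub_C_pow_card_sub_one [DecidableEq F] (a y : F) :
    (1 - (X - C a) ^ (Fintype.card F - 1)).eval y = if y = a then 1 else 0 := by
  have hq : Fintype.card F - 1 ≠ 0 := by have := Fintype.one_lt_card (α := F); omega
  split_ifs with h
  · simp [h, hq]
  · simp [FiniteField.pow_card_sub_one_eq_one _ (sub_ne_zero.mpr h)]

theorem eq_sum_C_eval_mul_of_natDegree_lt_card {P : F[X]} (hP : P.natDegree < Fintype.card F) :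
    P = ∑ a, C (P.eval a) * (1 - (X - C a) ^ (Fintype.card F - 1)) := by
  classical
  refine eq_of_natDegree_lt_card_of_eval_eq _ _ Function.injective_id (fun y => ?_)
    (max_lt hP ?_)
  · simp only [id, eval_finsetSum, eval_C_mul, eval_one_sub_X_sub_C_pow_card_sub_one]
    simp
  · have hdeg : ∀ a ∈ Finset.univ, (C (P.eval a) * (1 - (X - C a) ^ (Fintype.card F - 1))).natDegree
        ≤ Fintype.card F - 1 := fun a _ => by compute_degree
    have := natDegree_sum_le_of_forall_le _ _ hdeg
    have := Fintype.card_pos (α := F)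
    omega

theorem sum_eval_eq_neg_coeff {P : F[X]} (hP : P.natDegree < Fintype.card F) :
    ∑ a, P.eval a = -P.coeff (Fintype.card F - 1) := by
  have hq : Fintype.card F - 1 ≠ 0 := by have := Fintype.one_lt_card (α := F); omega
  have hlead : ∀ a : F, ((X - C a) ^ (Fintype.card F - 1)).coeff (Fintype.card F - 1) = 1 :=
    fun a => by simpa using ((monic_X_sub_C a).pow (Fintype.card F - 1)).coeff_natDegree
  conv_rhs => rw [eq_sum_C_eval_mul_of_natDegree_lt_card hP]
  simp [coeff_one, hq, hlead]

theorem eval_derivative_eq_sum {P : F[X]} (hP : P.natDegree < Fintype.card F) (t : F) :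
    P.derivative.eval t = ∑ a, P.eval a * (t - a) ^ (Fintype.card F - 2) := by
  conv_lhs => rw [eq_sum_C_eval_mul_of_natDegree_lt_card hP]
  simp [eval_finsetSum, derivative_X_sub_C_pow, Nat.cast_sub Fintype.card_pos, Nat.sub_sub]

theorem pow_card_sub_two_eq_inv {a : F} (ha : a ≠ 0) : a ^ (Fintype.card F - 2) = a⁻¹ := by
  have hq := Fintype.one_lt_card (α := F)
  refine eq_inv_of_mul_eq_one_left ?_
  rw [← pow_succ, show Fintype.card F - 2 + 1 = Fintype.card F - 1 by omega,
    FiniteField.pow_card_sub_one_eq_one a ha]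

theorem prod_erase_sub_eq_prod_erase_zero [DecidableEq F] {g : F → F} (hg : g.Injective) (a : F) :
    ∏ x ∈ Finset.univ.erase a, (g x - g a) = ∏ u ∈ Finset.univ.erase 0, u := by
  have hinj : (fun x => g x - g a).Injective := (sub_left_injective (b := g a)).comp hg
  have himage : (Finset.univ.erase a).image (fun x => g x - g a) = Finset.univ.erase 0 := by
    rw [Finset.image_erase hinj, sub_self,
      Finset.image_univ_of_surjective (Finite.injective_iff_surjective.mp hinj)]
  rw [← himage, Finset.prod_image hinj.injOn]

theorem prod_slope_eq_one [DecidableEq F] {g : F → F} (hg : g.Injective) (a : F) :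
    ∏ x ∈ Finset.univ.erase a, slope g a x = 1 := by
  have hid := prod_erase_sub_eq_prod_erase_zero Function.injective_id a
  simp only [id] at hid
  simp only [slope_def_field]
  rw [Finset.prod_div_distrib, hid, prod_erase_sub_eq_prod_erase_zero hg a]
  exact div_self (Finset.prod_ne_zero_iff.mpr fun u hu => Finset.ne_of_mem_erase hu)

end FiniteField

/-- `P` is a monic polynomial of degree `q - 1` over `GF(q)` which agrees with the indicator
function of the complement of `D`, except that it does not vanish at the point `d` of `D`. -/
structure IsAlmostIndicator {F : Type*} [Field F] [Fintype F] (D : Finset F) (d : F)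
    (P : F[X]) : Prop where
  monic : P.Monic
  natDegree_eq : P.natDegree = Fintype.card F - 1
  mem : d ∈ D
  eval_self_ne_zero : P.eval d ≠ 0
  eval_of_mem : ∀ y ∈ D, y ≠ d → P.eval y = 0
  eval_of_notMem : ∀ y ∉ D, P.eval y = 1

namespace IsAlmostIndicator

variable {F : Type*} [Field F] [Fintype F] {D : Finset F} {d d₁ d₂ t : F} {P P₁ P₂ : F[X]}

theorem natDegree_lt (h : IsAlmostIndicator D d P) : P.natDegree < Fintype.card F := by
  have := Fintype.card_pos (α := F)
  have := h.natDegree_eq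
  omega

theorem sum_eval_mul (h : IsAlmostIndicator D d P) (φ : F → F) [DecidableEq F] :
    ∑ y, P.eval y * φ y = P.eval d * φ d + ∑ y ∈ Dᶜ, φ y := by
  rw [← Finset.sum_add_sum_compl D, Finset.sum_eq_single_of_mem d h.mem
    fun y hy hne => by rw [h.eval_of_mem y hy hne, zero_mul]]
  congr 1
  refine Finset.sum_congr rfl fun y hy => ?_
  rw [h.eval_of_notMem y (Finset.mem_compl.mp hy), one_mul]

theorem eval_self (h : IsAlmostIndicator D d P) : P.eval d = D.card - 1 := by
  classical
  have hcoeff : P.coeff (Fintype.card F - 1) = 1 := h.natDegree_eq ▸ h.monic.coeff_natDegree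
  have hsum := h.sum_eval_mul 1
  simp only [Pi.one_apply, mul_one, sum_eval_eq_neg_coeff h.natDegree_lt, hcoeff, Finset.sum_const,
    nsmul_eq_mul, Finset.card_compl, Nat.cast_sub D.card_le_univ, Nat.cast_card_eq_zero] at hsum
  linear_combination -hsum

theorem natCast_card_ne_one (h : IsAlmostIndicator D d P) : (D.card : F) ≠ 1 :=
  sub_ne_zero.mp (h.eval_self ▸ h.eval_self_ne_zero)

theorem unique (h₁ : IsAlmostIndicator D d P₁) (h₂ : IsAlmostIndicator D d P₂) :
    P₁ = P₂ := by
  refine eq_of_natDegree_lt_card_of_eval_eq _ _ Function.injective_id (fun y => ?_)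
    (max_lt h₁.natDegree_lt h₂.natDegree_lt)
  rw [id]
  by_cases hy : y ∈ D
  · rcases eq_or_ne y d with rfl | hne
    · rw [h₁.eval_self, h₂.eval_self]
    · rw [h₁.eval_of_mem y hy hne, h₂.eval_of_mem y hy hne]
  · rw [h₁.eval_of_notMem y hy, h₂.eval_of_notMem y hy]

theorem inv_sub_eq_of_one_lt_rootMultiplicity [DecidableEq F] (h : IsAlmostIndicator D d P)
    (ht : 1 < P.rootMultiplicity t) :
    ((D.card : F) - 1) * (t - d)⁻¹ = -∑ y ∈ Dᶜ, (t - y) ^ (Fintype.card F - 2) := by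
  obtain ⟨hroot, hderiv⟩ := (one_lt_rootMultiplicity_iff_isRoot h.monic.ne_zero).mp ht
  have htd : t ≠ d := fun htd => h.eval_self_ne_zero (htd ▸ hroot)
  rw [IsRoot, eval_derivative_eq_sum h.natDegree_lt, h.sum_eval_mul, h.eval_self,
    pow_card_sub_two_eq_inv (sub_ne_zero.mpr htd)] at hderiv
  exact eq_neg_of_add_eq_zero_left hderiv

theorem eq_of_one_lt_rootMultiplicity (h₁ : IsAlmostIndicator D d₁ P₁)
    (h₂ : IsAlmostIndicator D d₂ P₂) (ht₁ : 1 < P₁.rootMultiplicity t)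
    (ht₂ : 1 < P₂.rootMultiplicity t) : d₁ = d₂ := by
  classical
  have hinv := (h₁.inv_sub_eq_of_one_lt_rootMultiplicity ht₁).trans
    (h₂.inv_sub_eq_of_one_lt_rootMultiplicity ht₂).symm
  exact sub_right_injective
    (inv_injective (mul_left_cancel₀ (sub_ne_zero.mpr h₁.natCast_card_ne_one) hinv))

end IsAlmostIndicator

section Slope

variable {F : Type*} [Field F] [Fintype F] [DecidableEq F]

/-- The monic polynomial whose roots are the slopes of the chords joining `(a, f a)` to the other
points of the graph of `f`, with multiplicity. -/
noncomputable def slopePoly (f : F → F) (a : F) : F[X] :=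
  ∏ x ∈ Finset.univ.erase a, (X - C (slope f a x))

theorem monic_slopePoly (f : F → F) (a : F) : (slopePoly f a).Monic :=
  monic_prod_of_monic _ _ fun _ _ => monic_X_sub_C _

theorem natDegree_slopePoly (f : F → F) (a : F) :
    (slopePoly f a).natDegree = Fintype.card F - 1 := by
  rw [slopePoly, natDegree_prod_of_monic _ _ fun _ _ => monic_X_sub_C _]
  simp

theorem eval_slopePoly_eq_one {f : F → F} {y : F} (hinj : (fun x => y * x - f x).Injective)
    (a : F) : (slopePoly f a).eval y = 1 := by
  have hslope : ∀ x ∈ Finset.univ.erase a,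
      y - slope f a x = slope (fun x => y * x - f x) a x := fun x hx => by
    have := sub_ne_zero.mpr (Finset.ne_of_mem_erase hx)
    simp only [slope_def_field]
    field_simp
    ring
  simp only [slopePoly, eval_prod, eval_sub, eval_X, eval_C]
  rw [Finset.prod_congr rfl hslope, prod_slope_eq_one hinj]

theorem rootMultiplicity_slopePoly (f : F → F) (a d : F) :
    (slopePoly f a).rootMultiplicity d
      = ((Finset.univ.erase a).filter fun x => slope f a x = d).card := by
  have hroots : (slopePoly f a).roots = (Finset.univ.erase a).val.map (slope f a) := by
    rw [← roots_multiset_prod_X_sub_C ((Finset.univ.erase a).val.map (slope f a)),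
      Multiset.map_map]
    rfl
  rw [← count_roots, hroots, Multiset.count_map, Finset.card, Finset.filter_val]
  simp only [eq_comm]

theorem card_filter_sub_eq_mul_sub (f : F → F) (a d : F) :
    (Finset.univ.filter fun x => f x - f a = d * (x - a)).card
      = (slopePoly f a).rootMultiplicity d + 1 := by
  have hset : (Finset.univ.filter fun x => f x - f a = d * (x - a))
      = insert a ((Finset.univ.erase a).filter fun x => slope f a x = d) := by
    ext x
    rcases eq_or_ne x a with rfl | hx
    · simp
    · simp [hx, slope_def_field, div_eq_iff (sub_ne_zero.mpr hx)]
  rw [hset, Finset.card_insert_of_notMem (by simp), rootMultiplicity_slopePoly]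

end Slope

end Polynomial

section Incidence

variable {F : Type*} [Field F] {P Q : PGPoint F} {L ℓ : PGLine F}

theorem pgMem_mk_iff {v : Fin 3 → F} (hv : v ≠ 0) :
    pgMem (Projectivization.mk F v hv) L ↔ v ∈ L.val := by
  rw [pgMem, Projectivization.submodule_mk, Submodule.span_singleton_le_iff_mem]

theorem exists_line_through (hPQ : P ≠ Q) : ∃ L : PGLine F, pgMem P L ∧ pgMem Q L := by
  have hle : ¬ P.submodule ≤ Q.submodule := fun h =>
    hPQ <| Projectivization.submodule_injective <|
      Submodule.eq_of_le_of_finrank_eq h (by simp only [Projectivization.finrank_submodule])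
  have hinf : Module.finrank F ↥(P.submodule ⊓ Q.submodule) < 1 :=
    (Submodule.finrank_lt_finrank_of_lt (inf_lt_left.mpr hle)).trans_eq P.finrank_submodule
  have hsum := Submodule.finrank_sup_add_finrank_inf_eq P.submodule Q.submodule
  rw [P.finrank_submodule, Q.finrank_submodule] at hsum
  exact ⟨⟨P.submodule ⊔ Q.submodule, by omega⟩, le_sup_left, le_sup_right⟩

theorem existsUnique_mem_inter (hne : L ≠ ℓ) : ∃! P : PGPoint F, pgMem P L ∧ pgMem P ℓ := by
  have hle : ¬ ℓ.val ≤ L.val := fun h =>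
    hne <| Subtype.ext (Submodule.eq_of_le_of_finrank_eq h (by rw [L.2, ℓ.2])).symm
  have hlt := Submodule.finrank_lt_finrank_of_lt (left_lt_sup.mpr hle)
  have hsup : Module.finrank F ↥(L.val ⊔ ℓ.val) ≤ 3 := by
    simpa using Submodule.finrank_le (L.val ⊔ ℓ.val)
  have hsum := Submodule.finrank_sup_add_finrank_inf_eq L.val ℓ.val
  rw [L.2] at hlt
  rw [L.2, ℓ.2] at hsum
  have hinf : Module.finrank F ↥(L.val ⊓ ℓ.val) = 1 := by omega
  refine ⟨.mk'' _ hinf, le_inf_iff.mp (Projectivization.submodule_mk'' _ hinf).le, fun P hP => ?_⟩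
  refine Projectivization.submodule_injective <| Submodule.eq_of_le_of_finrank_eq ?_ ?_
  · rw [Projectivization.submodule_mk'']
    exact le_inf hP.1 hP.2
  · simp only [Projectivization.finrank_submodule]

theorem ncard_setOf_pgMem [Finite F] (L : PGLine F) :
    {P | pgMem P L}.ncard = Nat.card F + 1 := by
  have hrange : {P | pgMem P L}
      = Set.range (Projectivization.map L.val.subtype L.val.injective_subtype) := by
    ext P
    constructor
    · induction P using Projectivization.ind with | h v hv => ?_
      intro hvL
      exact ⟨.mk F ⟨v, (pgMem_mk_iff hv).mp hvL⟩ (by simpa using hv), rfl⟩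
    · rintro ⟨P, rfl⟩
      induction P using Projectivization.ind with | h v hv => ?_
      exact (pgMem_mk_iff _).mpr v.2
  rw [hrange, Set.ncard_range_of_injective (Projectivization.map_injective _ _),
    Projectivization.card_of_finrank_two F L.val L.2]

theorem exists_basis_of_mem_line {g : Fin 3 → F} (hg : g ≠ 0) (hgL : g ∈ L.val) :
    ∃ b : Module.Basis (Fin 3) F (Fin 3 → F), b 0 ∉ L.val ∧ b 1 ∈ L.val ∧ b 2 = g := by
  obtain ⟨e, heL, heg⟩ : ∃ e ∈ L.val, e ∉ Submodule.span F {g} := by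
    by_contra! h
    have := Submodule.finrank_mono (show L.val ≤ Submodule.span F {g} from h)
    rw [L.2, finrank_span_singleton hg] at this
    omega
  obtain ⟨r, -, hr⟩ := SetLike.exists_of_lt (show L.val < ⊤ from lt_top_iff_ne_top.mpr fun h => by
    have := L.2
    rw [h, finrank_top, Module.finrank_fin_fun] at this
    omega)
  have hspan : Submodule.span F (Set.range ![e, g]) ≤ L.val := by
    simp [Submodule.span_le, Set.insert_subset_iff, heL, hgL]
  have heg_indep : LinearIndependent F ![e, g] :=
    .finCons (LinearIndependent.of_subsingleton (0 : Fin 1) hg) (by simpa using heg)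
  have hindep : LinearIndependent F ![r, e, g] := heg_indep.finCons fun h => hr (hspan h)
  exact ⟨basisOfLinearIndependentOfCardEqFinrank hindep (by simp), by simpa, by simpa, by simp⟩

end Incidence

/-- A system of homogeneous coordinates `(X₀ : X₁ : X₂)` in which `ℓ` is the line `X₀ = 0`, given
as the map from coordinates to vectors. -/
structure AffineChart {F : Type*} [Field F] (ℓ : PGLine F) where
  toLinearEquiv : (Fin 3 → F) ≃ₗ[F] (Fin 3 → F)
  mem_iff : ∀ v, toLinearEquiv v ∈ ℓ.val ↔ v 0 = 0

namespace AffineChart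

variable {F : Type*} [Field F] {ℓ L : PGLine F}

/-- The point with homogeneous coordinates `v`. -/
def point (c : AffineChart ℓ) (v : Fin 3 → F) (hv : v ≠ 0) : PGPoint F :=
  .mk F (c.toLinearEquiv v) (c.toLinearEquiv.map_ne_zero_iff.mpr hv)

/-- The affine point with coordinates `(x, z)`. -/
def affinePoint (c : AffineChart ℓ) (x z : F) : PGPoint F :=
  c.point ![1, x, z] fun h => one_ne_zero (congrFun h 0)

/-- The point at infinity of the lines of slope `d`. -/
def slopePoint (c : AffineChart ℓ) (d : F) : PGPoint F :=
  c.point ![0, 1, d] fun h => one_ne_zero (congrFun h 1)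

/-- The point at infinity of the vertical lines. -/
def verticalPoint (c : AffineChart ℓ) : PGPoint F :=
  c.point ![0, 0, 1] fun h => one_ne_zero (congrFun h 2)

variable (c : AffineChart ℓ)

theorem pgMem_point_iff {v : Fin 3 → F} (hv : v ≠ 0) :
    pgMem (c.point v hv) L ↔ c.toLinearEquiv v ∈ L.val :=
  pgMem_mk_iff _

theorem point_eq_point_iff {v w : Fin 3 → F} (hv : v ≠ 0) (hw : w ≠ 0) :
    c.point v hv = c.point w hw ↔ ∃ a : F, a • w = v := by
  simp only [point, Projectivization.mk_eq_mk_iff', ← map_smul, c.toLinearEquiv.injective.eq_iff]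

theorem exists_eq_point (P : PGPoint F) : ∃ v hv, P = c.point v hv := by
  induction P using Projectivization.ind with | h w hw => ?_
  exact ⟨c.toLinearEquiv.symm w, c.toLinearEquiv.symm.map_ne_zero_iff.mpr hw, by simp [point]⟩

theorem slopePoint_mem (d : F) : pgMem (c.slopePoint d) ℓ :=
  (c.pgMem_point_iff _).mpr ((c.mem_iff _).mpr rfl)

theorem verticalPoint_mem : pgMem c.verticalPoint ℓ :=
  (c.pgMem_point_iff _).mpr ((c.mem_iff _).mpr rfl)

theorem affinePoint_notMem (x z : F) : ¬ pgMem (c.affinePoint x z) ℓ := fun h =>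
  one_ne_zero ((c.mem_iff _).mp ((c.pgMem_point_iff _).mp h))

theorem affinePoint_inj {x z x' z' : F} :
    c.affinePoint x z = c.affinePoint x' z' ↔ x = x' ∧ z = z' := by
  refine ⟨fun h => ?_, by rintro ⟨rfl, rfl⟩; rfl⟩
  obtain ⟨a, ha⟩ := (c.point_eq_point_iff _ _).mp h
  have ha₀ : a = 1 := by simpa using congrFun ha 0
  subst ha₀
  exact ⟨by simpa using (congrFun ha 1).symm, by simpa using (congrFun ha 2).symm⟩

theorem slopePoint_injective : c.slopePoint.Injective := fun d d' h => by
  obtain ⟨a, ha⟩ := (c.point_eq_point_iff _ _).mp h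
  have ha₁ : a = 1 := by simpa using congrFun ha 1
  subst ha₁
  simpa using (congrFun ha 2).symm

theorem slopePoint_ne_verticalPoint (d : F) : c.slopePoint d ≠ c.verticalPoint := fun h => by
  obtain ⟨a, ha⟩ := (c.point_eq_point_iff _ _).mp h
  simpa using congrFun ha 1

theorem exists_eq_affinePoint {P : PGPoint F} (hP : ¬ pgMem P ℓ) :
    ∃ x z, P = c.affinePoint x z := by
  obtain ⟨v, hv, rfl⟩ := c.exists_eq_point P
  have hv₀ : v 0 ≠ 0 := fun h => hP ((c.pgMem_point_iff hv).mpr ((c.mem_iff v).mpr h))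
  refine ⟨v 1 / v 0, v 2 / v 0, (c.point_eq_point_iff _ _).mpr ⟨v 0, ?_⟩⟩
  ext i
  fin_cases i <;> simp [mul_div_cancel₀, hv₀]

theorem eq_verticalPoint_or_exists_eq_slopePoint {P : PGPoint F} (hP : pgMem P ℓ) :
    P = c.verticalPoint ∨ ∃ d, P = c.slopePoint d := by
  obtain ⟨v, hv, rfl⟩ := c.exists_eq_point P
  have hv₀ : v 0 = 0 := (c.mem_iff v).mp ((c.pgMem_point_iff hv).mp hP)
  by_cases hv₁ : v 1 = 0
  · refine Or.inl ((c.point_eq_point_iff _ _).mpr ⟨v 2, ?_⟩)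
    ext i
    fin_cases i <;> simp [hv₀, hv₁]
  · refine Or.inr ⟨v 2 / v 1, (c.point_eq_point_iff _ _).mpr ⟨v 1, ?_⟩⟩
    ext i
    fin_cases i <;> simp [hv₀, mul_div_cancel₀, hv₁]

theorem exists_verticalPoint_eq {P : PGPoint F} (hP : pgMem P ℓ) :
    ∃ c : AffineChart ℓ, c.verticalPoint = P := by
  induction P using Projectivization.ind with | h g hg => ?_
  obtain ⟨b, h₀, h₁, rfl⟩ := exists_basis_of_mem_line hg ((pgMem_mk_iff hg).mp hP)
  rw [pgMem_mk_iff] at hP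
  refine ⟨⟨b.equivFun.symm, fun v => ?_⟩, ?_⟩
  · have hℓ : v 1 • b 1 + v 2 • b 2 ∈ ℓ.val :=
      add_mem (Submodule.smul_mem _ _ h₁) (Submodule.smul_mem _ _ hP)
    rw [b.equivFun_symm_apply, Fin.sum_univ_three, add_assoc, Submodule.add_mem_iff_left _ hℓ]
    exact ⟨fun h => by_contra fun hv => h₀ ((Submodule.smul_mem_iff _ hv).mp h),
      fun h => by simp [h]⟩
  · simp [verticalPoint, point, b.equivFun_symm_apply, Fin.sum_univ_three]

variable {c}

theorem slopePoint_mem_iff {x z d d' : F} (hL : pgMem (c.affinePoint x z) L)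
    (hd : pgMem (c.slopePoint d) L) : pgMem (c.slopePoint d') L ↔ d' = d := by
  refine ⟨fun hd' => ?_, by rintro rfl; exact hd⟩
  have hne : L ≠ ℓ := by rintro rfl; exact c.affinePoint_notMem x z hL
  exact c.slopePoint_injective ((existsUnique_mem_inter hne).unique
    ⟨hd', c.slopePoint_mem d'⟩ ⟨hd, c.slopePoint_mem d⟩)

theorem slopePoint_notMem {x z : F} (hL : pgMem (c.affinePoint x z) L)
    (hvert : pgMem c.verticalPoint L) (d : F) : ¬ pgMem (c.slopePoint d) L := fun hd => by
  have hne : L ≠ ℓ := by rintro rfl; exact c.affinePoint_notMem x z hL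
  exact c.slopePoint_ne_verticalPoint d ((existsUnique_mem_inter hne).unique
    ⟨hd, c.slopePoint_mem d⟩ ⟨hvert, c.verticalPoint_mem⟩)

theorem affinePoint_mem_iff_of_slopePoint_mem {a b d x z : F}
    (hL : pgMem (c.affinePoint a b) L) (hd : pgMem (c.slopePoint d) L) :
    pgMem (c.affinePoint x z) L ↔ z - b = d * (x - a) := by
  have hvert : ¬ pgMem c.verticalPoint L := fun h => slopePoint_notMem hL h d hd
  have hcomb : (![1, x, z] : Fin 3 → F)
      = ![1, a, b] + (x - a) • ![0, 1, d] + (z - b - d * (x - a)) • ![0, 0, 1] := by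
    ext i
    fin_cases i <;> simp
    ring
  simp only [affinePoint, slopePoint, verticalPoint, pgMem_point_iff] at hL hd hvert ⊢
  rw [hcomb, map_add, map_add, map_smul, map_smul,
    Submodule.add_mem_iff_right _ (add_mem hL (Submodule.smul_mem _ _ hd)), ← sub_eq_zero]
  exact ⟨fun h => by_contra fun h0 => hvert ((Submodule.smul_mem_iff _ h0).mp h),
    fun h => by simp [h]⟩

theorem affinePoint_mem_iff_of_verticalPoint_mem {a b x z : F}
    (hL : pgMem (c.affinePoint a b) L) (hvert : pgMem c.verticalPoint L) :
    pgMem (c.affinePoint x z) L ↔ x = a := by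
  have hhor : ¬ pgMem (c.slopePoint 0) L := slopePoint_notMem hL hvert 0
  have hcomb : (![1, x, z] : Fin 3 → F)
      = ![1, a, b] + (z - b) • ![0, 0, 1] + (x - a) • ![0, 1, 0] := by
    ext i
    fin_cases i <;> simp
  simp only [affinePoint, slopePoint, verticalPoint, pgMem_point_iff] at hL hhor hvert ⊢
  rw [hcomb, map_add, map_add, map_smul, map_smul,
    Submodule.add_mem_iff_right _ (add_mem hL (Submodule.smul_mem _ _ hvert)), ← sub_eq_zero]
  exact ⟨fun h => by_contra fun h0 => hhor ((Submodule.smul_mem_iff _ h0).mp h),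
    fun h => by simp [h]⟩

end AffineChart

/-- In the chart `c` the affine part of `B` is the graph of `f`, and `D` consists of the slopes of
the points of `B` at infinity; the vertical point does not belong to `B`. -/
structure IsGraph {F : Type*} [Field F] {ℓ : PGLine F} (c : AffineChart ℓ) (B : Set (PGPoint F))
    (f : F → F) (D : Finset F) : Prop where
  affinePoint_mem_iff : ∀ x z, c.affinePoint x z ∈ B ↔ z = f x
  slopePoint_mem_iff : ∀ d, c.slopePoint d ∈ B ↔ d ∈ D
  verticalPoint_notMem : c.verticalPoint ∉ B

/-- `b` is a bisecant of `B` through `R`, and no other line through `R` is a bisecant. -/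
structure IsOnlyBisecant {F : Type*} [Field F] (B : Set (PGPoint F)) (R : PGPoint F)
    (b : PGLine F) : Prop where
  mem : pgMem R b
  nsec_eq_two : nsec B b = 2
  eq_of_bisecant : ∀ L : PGLine F, pgMem R L ∧ nsec B L = 2 → L = b

section Graph

variable {F : Type*} [Field F] {B : Set (PGPoint F)} {ℓ : PGLine F} {c : AffineChart ℓ}

theorem AffineChart.exists_line_through_affinePoint (x z : F) {P : PGPoint F} (hP : pgMem P ℓ) :
    ∃ L : PGLine F, pgMem (c.affinePoint x z) L ∧ pgMem P L :=
  exists_line_through (by rintro rfl; exact c.affinePoint_notMem x z hP)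

theorem isBlocking.exists_affinePoint_mem (hB : isBlocking B) (hvert : c.verticalPoint ∉ B)
    (x : F) : ∃ z, c.affinePoint x z ∈ B := by
  obtain ⟨L, hxL, hvertL⟩ := AffineChart.exists_line_through_affinePoint x 0 c.verticalPoint_mem
  obtain ⟨P, hPB, hPL⟩ := hB L
  by_cases hPℓ : pgMem P ℓ
  · obtain rfl | ⟨d, rfl⟩ := c.eq_verticalPoint_or_exists_eq_slopePoint hPℓ
    · exact absurd hPB hvert
    · exact absurd hPL (AffineChart.slopePoint_notMem hxL hvertL d)
  · obtain ⟨x', z, rfl⟩ := c.exists_eq_affinePoint hPℓ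
    obtain rfl := (AffineChart.affinePoint_mem_iff_of_verticalPoint_mem hxL hvertL).mp hPL
    exact ⟨z, hPB⟩

namespace IsGraph

variable {f : F → F} {D : Finset F} {L b : PGLine F} {R M : PGPoint F} {a a₁ a₂ d : F}

theorem exists_eq_affinePoint (hG : IsGraph c B f D) (hRB : R ∈ B) (hRℓ : ¬ pgMem R ℓ) :
    ∃ a, R = c.affinePoint a (f a) := by
  obtain ⟨x, z, rfl⟩ := c.exists_eq_affinePoint hRℓ
  obtain rfl := (hG.affinePoint_mem_iff x z).mp hRB
  exact ⟨x, rfl⟩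

theorem exists_eq_slopePoint (hG : IsGraph c B f D) (hRB : R ∈ B) (hRℓ : pgMem R ℓ) :
    ∃ d ∈ D, R = c.slopePoint d := by
  obtain rfl | ⟨d, rfl⟩ := c.eq_verticalPoint_or_exists_eq_slopePoint hRℓ
  · exact absurd hRB hG.verticalPoint_notMem
  · exact ⟨d, (hG.slopePoint_mem_iff d).mp hRB, rfl⟩

theorem nsec_eq [Finite F] (hG : IsGraph c B f D) (L : PGLine F) :
    nsec B L = {x | pgMem (c.affinePoint x (f x)) L}.ncard
      + {d ∈ (D : Set F) | pgMem (c.slopePoint d) L}.ncard := by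
  have hinj : (fun x => c.affinePoint x (f x)).Injective := fun x x' h =>
    (c.affinePoint_inj.mp h).1
  have hunion : {P ∈ B | pgMem P L}
      = (fun x => c.affinePoint x (f x)) '' {x | pgMem (c.affinePoint x (f x)) L}
        ∪ c.slopePoint '' {d ∈ (D : Set F) | pgMem (c.slopePoint d) L} := by
    ext P
    constructor
    · rintro ⟨hPB, hPL⟩
      by_cases hPℓ : pgMem P ℓ
      · obtain ⟨d, hd, rfl⟩ := hG.exists_eq_slopePoint hPB hPℓ
        exact Or.inr ⟨d, ⟨hd, hPL⟩, rfl⟩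
      · obtain ⟨x, rfl⟩ := hG.exists_eq_affinePoint hPB hPℓ
        exact Or.inl ⟨x, hPL, rfl⟩
    · rintro (⟨x, hx, rfl⟩ | ⟨d, ⟨hd, hdL⟩, rfl⟩)
      · exact ⟨(hG.affinePoint_mem_iff _ _).mpr rfl, hx⟩
      · exact ⟨(hG.slopePoint_mem_iff d).mpr hd, hdL⟩
  rw [nsec, hunion, Set.ncard_union_eq, Set.ncard_image_of_injective _ hinj,
    Set.ncard_image_of_injective _ c.slopePoint_injective]
  rw [Set.disjoint_left]
  rintro _ ⟨x, -, rfl⟩ ⟨d, -, hd⟩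
  have hd' : c.slopePoint d = c.affinePoint x (f x) := hd
  exact c.affinePoint_notMem x (f x) (hd' ▸ c.slopePoint_mem d)

theorem nsec_infinity [Finite F] (hG : IsGraph c B f D) : nsec B ℓ = D.card := by
  simp [hG.nsec_eq, c.affinePoint_notMem, c.slopePoint_mem]

theorem nsec_of_verticalPoint_mem [Finite F] (hG : IsGraph c B f D)
    (haL : pgMem (c.affinePoint a (f a)) L) (hvert : pgMem c.verticalPoint L) : nsec B L = 1 := by
  simp [hG.nsec_eq, AffineChart.affinePoint_mem_iff_of_verticalPoint_mem haL hvert,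
    AffineChart.slopePoint_notMem haL hvert]

theorem injective_of_notMem [Finite F] (hG : IsGraph c B f D) (hB : isBlocking B) {y : F}
    (hy : y ∉ D) : (fun x => y * x - f x).Injective := by
  refine Finite.injective_iff_surjective.mpr fun w => ?_
  obtain ⟨L, hwL, hyL⟩ :=
    AffineChart.exists_line_through_affinePoint (c := c) 0 (-w) (c.slopePoint_mem y)
  obtain ⟨P, hPB, hPL⟩ := hB L
  by_cases hPℓ : pgMem P ℓ
  · obtain ⟨d, hd, rfl⟩ := hG.exists_eq_slopePoint hPB hPℓ
    exact absurd ((AffineChart.slopePoint_mem_iff hwL hyL).mp hPL ▸ hd) hy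
  · obtain ⟨x, rfl⟩ := hG.exists_eq_affinePoint hPB hPℓ
    have hline := (AffineChart.affinePoint_mem_iff_of_slopePoint_mem hwL hyL).mp hPL
    exact ⟨x, by linear_combination -hline⟩

variable [Fintype F] [DecidableEq F]

theorem nsec_of_slopePoint_mem (hG : IsGraph c B f D)
    (haL : pgMem (c.affinePoint a (f a)) L) (hdL : pgMem (c.slopePoint d) L) :
    nsec B L = (slopePoly f a).rootMultiplicity d + 1 + if d ∈ D then 1 else 0 := by
  have hinfinity : {d' ∈ (D : Set F) | d' = d} = if d ∈ D then {d} else ∅ := by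
    ext d'
    split_ifs with hd
    · simpa using by rintro rfl; exact hd
    · simpa using by rintro hd' rfl; exact hd hd'
  simp only [hG.nsec_eq, AffineChart.affinePoint_mem_iff_of_slopePoint_mem haL hdL,
    AffineChart.slopePoint_mem_iff haL hdL, hinfinity, ← card_filter_sub_eq_mul_sub]
  rw [← Set.ncard_coe_finset]
  congr 1
  · simp
  · split_ifs <;> simp

theorem nsec_eq_two_iff (hG : IsGraph c B f D) (hB : isBlocking B)
    (haL : pgMem (c.affinePoint a (f a)) L) (hdL : pgMem (c.slopePoint d) L) :
    nsec B L = 2 ↔ d ∈ D ∧ (slopePoly f a).eval d ≠ 0 := by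
  have hroot := Polynomial.rootMultiplicity_pos (monic_slopePoly f a).ne_zero (x := d)
  rw [hG.nsec_of_slopePoint_mem haL hdL, ne_eq, ← Polynomial.IsRoot.def, ← hroot]
  split_ifs with hd
  · simp only [hd, true_and]
    omega
  · have hmult : ¬ 0 < (slopePoly f a).rootMultiplicity d := fun h =>
      one_ne_zero ((eval_slopePoly_eq_one (hG.injective_of_notMem hB hd) a).symm.trans
        (hroot.mp h))
    simp only [hd, false_and, iff_false]
    omega

theorem exists_isAlmostIndicator (hG : IsGraph c B f D) (hB : isBlocking B)
    (hb : IsOnlyBisecant B (c.affinePoint a (f a)) b) :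
    ∃ d, pgMem (c.slopePoint d) b ∧ IsAlmostIndicator D d (slopePoly f a) := by
  have hbℓ : b ≠ ℓ := by
    rintro rfl
    exact c.affinePoint_notMem a (f a) hb.mem
  obtain ⟨P, hPb, hPℓ⟩ := (existsUnique_mem_inter hbℓ).exists
  obtain rfl | ⟨d, rfl⟩ := c.eq_verticalPoint_or_exists_eq_slopePoint hPℓ
  · have := hG.nsec_of_verticalPoint_mem hb.mem hPb
    have := hb.nsec_eq_two
    omega
  obtain ⟨hdD, hd⟩ := (hG.nsec_eq_two_iff hB hb.mem hPb).mp hb.nsec_eq_two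
  refine ⟨d, hPb, monic_slopePoly f a, natDegree_slopePoly f a, hdD, hd, fun y hy hne => ?_,
    fun y hy => eval_slopePoly_eq_one (hG.injective_of_notMem hB hy) a⟩
  by_contra heval
  obtain ⟨L, haL, hyL⟩ :=
    AffineChart.exists_line_through_affinePoint (c := c) a (f a) (c.slopePoint_mem y)
  obtain rfl := hb.eq_of_bisecant L ⟨haL, (hG.nsec_eq_two_iff hB haL hyL).mpr ⟨hy, heval⟩⟩
  exact hne ((AffineChart.slopePoint_mem_iff haL hPb).mp hyL)

theorem nsec_eq_nsec_of_slopePoly_eq (hG : IsGraph c B f D)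
    (hpoly : slopePoly f a₁ = slopePoly f a₂) (hMℓ : pgMem M ℓ) {L₁ L₂ : PGLine F}
    (hML₁ : pgMem M L₁) (haL₁ : pgMem (c.affinePoint a₁ (f a₁)) L₁)
    (hML₂ : pgMem M L₂) (haL₂ : pgMem (c.affinePoint a₂ (f a₂)) L₂) : nsec B L₁ = nsec B L₂ := by
  obtain rfl | ⟨d, rfl⟩ := c.eq_verticalPoint_or_exists_eq_slopePoint hMℓ
  · rw [hG.nsec_of_verticalPoint_mem haL₁ hML₁, hG.nsec_of_verticalPoint_mem haL₂ hML₂]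
  · rw [hG.nsec_of_slopePoint_mem haL₁ hML₁, hG.nsec_of_slopePoint_mem haL₂ hML₂, hpoly]

theorem exists_one_lt_rootMultiplicity_of_four_le (hG : IsGraph c B f D) {T : PGPoint F}
    (hTℓ : pgMem T ℓ)
    (h₁ : ∀ L : PGLine F, pgMem (c.affinePoint a₁ (f a₁)) L → pgMem T L → 4 ≤ nsec B L)
    (h₂ : ∀ L : PGLine F, pgMem (c.affinePoint a₂ (f a₂)) L → pgMem T L → 4 ≤ nsec B L) :
    ∃ t, 1 < (slopePoly f a₁).rootMultiplicity t ∧ 1 < (slopePoly f a₂).rootMultiplicity t := by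
  obtain ⟨K₁, haK₁, hTK₁⟩ :=
    AffineChart.exists_line_through_affinePoint (c := c) a₁ (f a₁) hTℓ
  obtain ⟨K₂, haK₂, hTK₂⟩ :=
    AffineChart.exists_line_through_affinePoint (c := c) a₂ (f a₂) hTℓ
  have hK₁ := h₁ K₁ haK₁ hTK₁
  have hK₂ := h₂ K₂ haK₂ hTK₂
  obtain rfl | ⟨t, rfl⟩ := c.eq_verticalPoint_or_exists_eq_slopePoint hTℓ
  · rw [hG.nsec_of_verticalPoint_mem haK₁ hTK₁] at hK₁
    omega
  · rw [hG.nsec_of_slopePoint_mem haK₁ hTK₁] at hK₁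
    rw [hG.nsec_of_slopePoint_mem haK₂ hTK₂] at hK₂
    refine ⟨t, ?_⟩
    split_ifs at hK₁ hK₂ <;> omega

end IsGraph

variable [Fintype F]

theorem isRedeiWithLine.exists_notMem (hB : isRedeiWithLine (Fintype.card F) B ℓ) :
    ∃ P, pgMem P ℓ ∧ P ∉ B := by
  by_contra! h
  have hle : {P | pgMem P ℓ}.ncard ≤ nsec B ℓ := Set.ncard_le_ncard fun P hP => ⟨h P hP, hP⟩
  rw [ncard_setOf_pgMem, Nat.card_eq_fintype_card] at hle
  have := hB.2.1
  have := hB.2.2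
  omega

theorem isRedeiWithLine.range_affinePoint_eq (hB : isRedeiWithLine (Fintype.card F) B ℓ)
    {f : F → F} (hf : ∀ x, c.affinePoint x (f x) ∈ B) :
    Set.range (fun x => c.affinePoint x (f x)) = B \ {P ∈ B | pgMem P ℓ} := by
  have hinj : (fun x => c.affinePoint x (f x)).Injective := fun x x' h =>
    (c.affinePoint_inj.mp h).1
  refine Set.eq_of_subset_of_ncard_le ?_ ?_
  · rintro _ ⟨x, rfl⟩
    exact ⟨hf x, fun h => c.affinePoint_notMem x (f x) h.2⟩
  · rw [Set.ncard_range_of_injective hinj, Nat.card_eq_fintype_card,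
      Set.ncard_sdiff (Set.sep_subset _ _), ← hB.2.2, nsec]
    omega

theorem isRedeiWithLine.exists_isGraph (hB : isRedeiWithLine (Fintype.card F) B ℓ) :
    ∃ (c : AffineChart ℓ) (f : F → F) (D : Finset F), IsGraph c B f D := by
  classical
  obtain ⟨P, hPℓ, hPB⟩ := hB.exists_notMem
  obtain ⟨c, rfl⟩ := AffineChart.exists_verticalPoint_eq hPℓ
  choose f hf using hB.1.exists_affinePoint_mem hPB
  refine ⟨c, f, Finset.univ.filter fun d => c.slopePoint d ∈ B,
    fun x z => ⟨fun hxz => ?_, fun h => h ▸ hf x⟩, fun d => by simp, hPB⟩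
  obtain ⟨x', hx'⟩ : c.affinePoint x z ∈ Set.range fun x => c.affinePoint x (f x) := by
    rw [hB.range_affinePoint_eq hf]
    exact ⟨hxz, fun h => c.affinePoint_notMem x z h.2⟩
  obtain ⟨rfl, hz⟩ := c.affinePoint_inj.mp hx'
  exact hz.symm

end Graph

section Redei

variable {F : Type*} [Field F] [Fintype F] {B : Set (PGPoint F)} {ℓ b b₁ b₂ : PGLine F}
  {R R₁ R₂ : PGPoint F}

theorem isRedeiWithLine.natCast_nsec_ne_one (hB : isRedeiWithLine (Fintype.card F) B ℓ)
    (hRB : R ∈ B) (hRℓ : ¬ pgMem R ℓ) (hb : IsOnlyBisecant B R b) : (nsec B ℓ : F) ≠ 1 := by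
  classical
  obtain ⟨c, f, D, hG⟩ := hB.exists_isGraph
  obtain ⟨a, rfl⟩ := hG.exists_eq_affinePoint hRB hRℓ
  obtain ⟨d, -, hd⟩ := hG.exists_isAlmostIndicator hB.1 hb
  exact hG.nsec_infinity ▸ hd.natCast_card_ne_one

theorem isRedeiWithLine.nsec_eq_nsec_of_four_le (hB : isRedeiWithLine (Fintype.card F) B ℓ)
    (hR₁B : R₁ ∈ B) (hR₂B : R₂ ∈ B) (hR₁ℓ : ¬ pgMem R₁ ℓ) (hR₂ℓ : ¬ pgMem R₂ ℓ)
    (hb₁ : IsOnlyBisecant B R₁ b₁) (hb₂ : IsOnlyBisecant B R₂ b₂)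
    {T : PGPoint F} (hTℓ : pgMem T ℓ)
    (hT₁ : ∀ L : PGLine F, pgMem R₁ L → pgMem T L → 4 ≤ nsec B L)
    (hT₂ : ∀ L : PGLine F, pgMem R₂ L → pgMem T L → 4 ≤ nsec B L)
    {M : PGPoint F} (hMℓ : pgMem M ℓ) {L₁ L₂ : PGLine F} (hML₁ : pgMem M L₁)
    (hRL₁ : pgMem R₁ L₁) (hML₂ : pgMem M L₂) (hRL₂ : pgMem R₂ L₂) : nsec B L₁ = nsec B L₂ := by
  classical
  obtain ⟨c, f, D, hG⟩ := hB.exists_isGraph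
  obtain ⟨a₁, rfl⟩ := hG.exists_eq_affinePoint hR₁B hR₁ℓ
  obtain ⟨a₂, rfl⟩ := hG.exists_eq_affinePoint hR₂B hR₂ℓ
  obtain ⟨d₁, -, hd₁⟩ := hG.exists_isAlmostIndicator hB.1 hb₁
  obtain ⟨d₂, -, hd₂⟩ := hG.exists_isAlmostIndicator hB.1 hb₂
  obtain ⟨t, ht₁, ht₂⟩ := hG.exists_one_lt_rootMultiplicity_of_four_le hTℓ hT₁ hT₂
  obtain rfl := hd₁.eq_of_one_lt_rootMultiplicity hd₂ ht₁ ht₂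
  exact hG.nsec_eq_nsec_of_slopePoly_eq (hd₁.unique hd₂) hMℓ hML₁ hRL₁ hML₂ hRL₂

theorem isRedeiWithLine.nsec_eq_nsec_of_bisecants_meet
    (hB : isRedeiWithLine (Fintype.card F) B ℓ)
    (hR₁B : R₁ ∈ B) (hR₂B : R₂ ∈ B) (hR₁ℓ : ¬ pgMem R₁ ℓ) (hR₂ℓ : ¬ pgMem R₂ ℓ)
    (hb₁ : IsOnlyBisecant B R₁ b₁) (hb₂ : IsOnlyBisecant B R₂ b₂)
    {X : PGPoint F} (hXb₁ : pgMem X b₁) (hXb₂ : pgMem X b₂) (hXℓ : pgMem X ℓ)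
    {M : PGPoint F} (hMℓ : pgMem M ℓ) {L₁ L₂ : PGLine F} (hML₁ : pgMem M L₁)
    (hRL₁ : pgMem R₁ L₁) (hML₂ : pgMem M L₂) (hRL₂ : pgMem R₂ L₂) : nsec B L₁ = nsec B L₂ := by
  classical
  obtain ⟨c, f, D, hG⟩ := hB.exists_isGraph
  obtain ⟨a₁, rfl⟩ := hG.exists_eq_affinePoint hR₁B hR₁ℓ
  obtain ⟨a₂, rfl⟩ := hG.exists_eq_affinePoint hR₂B hR₂ℓ
  obtain ⟨d₁, hdb₁, hd₁⟩ := hG.exists_isAlmostIndicator hB.1 hb₁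
  obtain ⟨d₂, hdb₂, hd₂⟩ := hG.exists_isAlmostIndicator hB.1 hb₂
  obtain rfl | ⟨x, rfl⟩ := c.eq_verticalPoint_or_exists_eq_slopePoint hXℓ
  · exact absurd hdb₁ (AffineChart.slopePoint_notMem hb₁.mem hXb₁ d₁)
  · obtain rfl := (AffineChart.slopePoint_mem_iff hb₁.mem hdb₁).mp hXb₁
    obtain rfl := (AffineChart.slopePoint_mem_iff hb₂.mem hdb₂).mp hXb₂
    exact hG.nsec_eq_nsec_of_slopePoly_eq (hd₁.unique hd₂) hMℓ hML₁ hRL₁ hML₂ hRL₂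

end Redei

/-- Let `B` be a blocking set of Rédei type in `PG(2,q)`, `q = p^h`, with Rédei line `ℓ`.
(1) If there is a point in `B ∖ ℓ` contained in exactly one bisecant of `B`,
    then `|B ∩ ℓ| ≢ 1 (mod p)`.
(2) If `R₁, R₂ ∈ B ∖ ℓ` are each contained in exactly one bisecant of `B`, and there is a
    point `T ∈ ℓ` such that both lines `R₁T` and `R₂T` meet `B` in at least four points,
    then `|MR₁ ∩ B| = |MR₂ ∩ B|` for every `M ∈ ℓ`.
(3) If `R₁, R₂ ∈ B ∖ ℓ` are each contained in exactly one bisecant of `B` and the common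
    point of these two bisecants lies on `ℓ`, then `|MR₁ ∩ B| = |MR₂ ∩ B|` for every `M ∈ ℓ`. -/
theorem stmt_2 {F : Type*} [Field F] [Fintype F] (p h q : ℕ) (hp : p.Prime) (hq : q = p ^ h)
    (hcard : Fintype.card F = q)
    (B : Set (PGPoint F)) (ℓ : PGLine F) (hB : isRedeiWithLine q B ℓ) :
    ((∃ R ∈ B, ¬ pgMem R ℓ ∧ (∃! L : PGLine F, pgMem R L ∧ nsec B L = 2)) →
      ¬ (nsec B ℓ ≡ 1 [MOD p])) ∧
    (∀ R₁ ∈ B, ∀ R₂ ∈ B, ¬ pgMem R₁ ℓ → ¬ pgMem R₂ ℓ →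
      (∃! L : PGLine F, pgMem R₁ L ∧ nsec B L = 2) →
      (∃! L : PGLine F, pgMem R₂ L ∧ nsec B L = 2) →
      (∃ T : PGPoint F, pgMem T ℓ ∧
        (∀ L : PGLine F, pgMem R₁ L → pgMem T L → 4 ≤ nsec B L) ∧
        (∀ L : PGLine F, pgMem R₂ L → pgMem T L → 4 ≤ nsec B L)) →
      ∀ M : PGPoint F, pgMem M ℓ →
        ∀ L₁ L₂ : PGLine F, pgMem M L₁ → pgMem R₁ L₁ → pgMem M L₂ → pgMem R₂ L₂ →
          nsec B L₁ = nsec B L₂) ∧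
    (∀ R₁ ∈ B, ∀ R₂ ∈ B, ¬ pgMem R₁ ℓ → ¬ pgMem R₂ ℓ →
      ∀ b₁ b₂ : PGLine F,
        (pgMem R₁ b₁ ∧ nsec B b₁ = 2 ∧ ∀ L : PGLine F, pgMem R₁ L ∧ nsec B L = 2 → L = b₁) →
        (pgMem R₂ b₂ ∧ nsec B b₂ = 2 ∧ ∀ L : PGLine F, pgMem R₂ L ∧ nsec B L = 2 → L = b₂) →
        (∃ X : PGPoint F, pgMem X b₁ ∧ pgMem X b₂ ∧ pgMem X ℓ) →
        ∀ M : PGPoint F, pgMem M ℓ →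
          ∀ L₁ L₂ : PGLine F, pgMem M L₁ → pgMem R₁ L₁ → pgMem M L₂ → pgMem R₂ L₂ →
            nsec B L₁ = nsec B L₂) := by
  subst hcard
  refine ⟨?_, ?_, ?_⟩
  · rintro ⟨R, hRB, hRℓ, b, ⟨hRb, hb⟩, hunique⟩ hmod
    have : Fact p.Prime := ⟨hp⟩
    have : CharP F p := charP_of_card_eq_prime_pow hq
    exact hB.natCast_nsec_ne_one hRB hRℓ ⟨hRb, hb, hunique⟩
      ((CharP.natCast_eq_natCast' F p hmod).trans Nat.cast_one)
  · rintro R₁ hR₁B R₂ hR₂B hR₁ℓ hR₂ℓ ⟨b₁, ⟨hRb₁, hb₁⟩, hunique₁⟩ ⟨b₂, ⟨hRb₂, hb₂⟩, hunique₂⟩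
      ⟨T, hTℓ, hT₁, hT₂⟩ M hMℓ L₁ L₂
    exact hB.nsec_eq_nsec_of_four_le hR₁B hR₂B hR₁ℓ hR₂ℓ ⟨hRb₁, hb₁, hunique₁⟩
      ⟨hRb₂, hb₂, hunique₂⟩ hTℓ hT₁ hT₂ hMℓ
  · rintro R₁ hR₁B R₂ hR₂B hR₁ℓ hR₂ℓ b₁ b₂ ⟨hRb₁, hb₁, hunique₁⟩ ⟨hRb₂, hb₂, hunique₂⟩
      ⟨X, hXb₁, hXb₂, hXℓ⟩ M hMℓ L₁ L₂
    exact hB.nsec_eq_nsec_of_bisecants_meet hR₁B hR₂B hR₁ℓ hR₂ℓ ⟨hRb₁, hb₁, hunique₁⟩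
      ⟨hRb₂, hb₂, hunique₂⟩ hXb₁ hXb₂ hXℓ hMℓ
end

section
/- Let f be a function from GF(q) to GF(q), let U = {(x, f(x)) : x ∈ GF(q)} be its graph, and let N be the number of directions determined by U. Let s = p^e be maximal such that every line whose direction is determined by U and which is incident with a point of U is incident with a multiple of s points of U. Then one of the following holds: (1) s = 1 and (q+3)/2 ≤ N ≤ q + 1; (2) q/s + 1 ≤ N ≤ (q − 1)/(s − 1); (3) s = q and N = 1. -/
/-!
Write `q = #F` and let `N` be the number of determined directions. The Rédei polynomial
`∏ (X + a * Y - f a)` becomes `X ^ q - X` when `Y` is specialised to an undetermined direction, so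
its coefficient at `X ^ k` with `2 ≤ k < q`, a polynomial of degree less than `q - k` in `Y`,
vanishes for `N ≤ k`.

At a determined direction the specialisation is `G ^ s` with `G = X ^ n + g` and `deg g < n`. By the
maximality of `s` there is such a direction with `G' = g' ≠ 0`. As `G` splits and each of its roots
is a root of `g ^ s + X`, it divides `(g ^ s + X) * g'`. This bounds the degree of `g` from below,
so the Rédei polynomial has a nonzero coefficient at some `X ^ k` with `k < q` and
`q + s ≤ (s + 1) * k`. For `s = 1` this yields `N > k ≥ (q + 1) / 2`.

For `s ≥ 2`, suppose `s * N ≤ q`. At most `q / s` lines of a given determined slope `m` meet the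
graph. Together with the bound `N` on the degree in `X` this forces the Taylor coefficients at `m`
of orders `1, …, s - 1` of every coefficient of the Rédei polynomial to vanish. Hence `(Y - m) ^ s`
divides the derivative of the coefficient at `X ^ k`, and this derivative is zero for degree
reasons. The undetermined directions are then double roots of that coefficient, more of them than
its degree allows: it is zero, a contradiction. So `s * N > q`, that is, `q / s + 1 ≤ N`.
-/

open Finset Polynomial

section Polynomial

variable {R ι : Type*}

theorem coeff_coeff_swap [CommSemiring R] (P : R[X][X]) (j k : ℕ) :
    ((Bivariate.swap P).coeff j).coeff k = (P.coeff k).coeff j := by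
  induction P using Polynomial.induction_on' with
  | add P Q hP hQ => simp only [map_add, coeff_add, hP, hQ]
  | monomial n u =>
    induction u using Polynomial.induction_on' with
    | add u v hu hv => simp only [map_add, coeff_add, hu, hv]
    | monomial i r =>
      rw [Bivariate.swap_monomial_monomial]
      simp only [coeff_monomial]
      split_ifs <;> simp only [coeff_monomial, coeff_zero, if_true, if_false, *]

/-- Substituting `V * X` for `X` makes `L i` a factor of the `i`-th factor of the product. -/
theorem prod_dvd_coeff_prod_mul_pow [CommSemiring R] (s : Finset ι) (L c : ι → R) {V : R}
    (hV : ∀ i ∈ s, L i ∣ V) (j : ℕ) :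
    ∏ i ∈ s, L i ∣ (∏ i ∈ s, (C (L i) + C (c i) * X)).coeff j * V ^ j := by
  choose! W hW using hV
  have hcomp : (∏ i ∈ s, (C (L i) + C (c i) * X)).comp (C V * X) =
      C (∏ i ∈ s, L i) * ∏ i ∈ s, (1 + C (c i * W i) * X) := by
    rw [Polynomial.prod_comp, map_prod, ← prod_mul_distrib]
    refine prod_congr rfl fun i hi => ?_
    rw [add_comp, mul_comp, C_comp, C_comp, X_comp, hW i hi, C_mul, C_mul]
    ring
  rw [← comp_C_mul_X_coeff, hcomp, coeff_C_mul]
  exact dvd_mul_right _ _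

theorem X_sub_C_pow_dvd_derivative [CommRing R] {P : R[X]} {m : R} {s : ℕ} (hs : (s : R) = 0)
    (hP : ∀ j, j ≠ 0 → j < s → (taylor m P).coeff j = 0) :
    (X - C m) ^ s ∣ derivative P := by
  have hdvd : (X - C m) ^ s ∣ P - C (P.eval m) := by
    rw [X_sub_C_pow_dvd_iff, ← taylor_apply, map_sub, taylor_C, X_pow_dvd_iff]
    rintro (_ | j) hj
    · simp
    · rw [coeff_sub, hP _ j.succ_ne_zero hj, coeff_C_succ, sub_zero]
  obtain ⟨Q, hQ⟩ := hdvd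
  refine ⟨derivative Q, ?_⟩
  rw [← sub_zero (derivative P), ← derivative_C (a := P.eval m), ← derivative_sub, hQ,
    derivative_mul, derivative_X_sub_C_pow, hs, C_0, zero_mul, zero_mul, zero_add]

theorem prod_X_sub_C_eq_pow_of_dvd_card_fiber [CommRing R] [DecidableEq R] (t : Finset ι)
    (φ : ι → R) {s : ℕ} (hs : ∀ b, s ∣ #{i ∈ t | φ i = b}) :
    ∏ i ∈ t, (X - C (φ i)) = (∏ b ∈ t.image φ, (X - C b) ^ (#{i ∈ t | φ i = b} / s)) ^ s := by
  rw [← prod_pow, ← prod_fiberwise_of_maps_to fun i hi => mem_image_of_mem φ hi]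
  refine prod_congr rfl fun b _ => ?_
  rw [← pow_mul, Nat.div_mul_cancel (hs b)]
  exact prod_eq_pow_card fun i hi => by rw [(mem_filter.mp hi).2]

section IsDomain

variable [CommRing R] [IsDomain R]

theorem mul_card_le_natDegree_of_pow_dvd {P : R[X]} (hP : P ≠ 0) (S : Finset R) {r : ℕ}
    (hS : ∀ a ∈ S, (X - C a) ^ r ∣ P) : r * #S ≤ P.natDegree := by
  classical
  have hroots : r • S.val ≤ P.roots := by
    refine Multiset.le_iff_count.mpr fun a => ?_
    rw [Multiset.count_nsmul, Multiset.count_eq_of_nodup S.nodup, count_roots]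
    split_ifs with ha
    · simpa only [mul_one] using (le_rootMultiplicity_iff hP).mpr (hS a ha)
    · exact Nat.zero_le _
  calc r * #S = Multiset.card (r • S.val) := (Multiset.card_nsmul _ _).symm
    _ ≤ Multiset.card P.roots := Multiset.card_le_card hroots
    _ ≤ P.natDegree := card_roots' P

theorem derivative_ne_zero_of_cast_rootMultiplicity_ne_zero {P : R[X]} {t : R}
    (ht : (P.rootMultiplicity t : R) ≠ 0) : derivative P ≠ 0 := by
  intro hder
  have hP : P ≠ 0 := fun h => ht (by rw [h, rootMultiplicity_zero, Nat.cast_zero])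
  have hroot : P.IsRoot t :=
    (rootMultiplicity_pos hP).mp (Nat.pos_of_ne_zero fun h => ht (by rw [h, Nat.cast_zero]))
  have hmult := derivative_rootMultiplicity_of_root_of_mem_nonZeroDivisors hroot
    (mem_nonZeroDivisors_of_ne_zero ht)
  have hone := (one_lt_rootMultiplicity_iff_isRoot hP).mpr ⟨hroot, by simp [hder]⟩
  rw [hder, rootMultiplicity_zero] at hmult
  omega

theorem rootMultiplicity_prod_X_sub_C [DecidableEq R] (s : Finset ι) (φ : ι → R) (b : R) :
    (∏ i ∈ s, (X - C (φ i))).rootMultiplicity b = #{i ∈ s | φ i = b} := by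
  have hroots : (∏ i ∈ s, (X - C (φ i))).roots = s.val.map φ := by
    rw [← roots_multiset_prod_X_sub_C (s.val.map φ), Multiset.map_map]
    rfl
  rw [← count_roots, hroots, Multiset.count_map]
  simp only [eq_comm, card_def, filter_val]

end IsDomain

theorem natDegree_derivative_lt_of_ne_zero [Semiring R] {P : R[X]} (hP : derivative P ≠ 0) :
    (derivative P).natDegree < P.natDegree :=
  natDegree_derivative_lt fun h => hP (derivative_of_natDegree_zero h)

theorem natDegree_C_mul_X_sub_C_le [Ring R] (a b : R) : (C a * X - C b).natDegree ≤ 1 := by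
  rw [sub_eq_add_neg, ← C_neg]
  exact natDegree_linear_le

theorem natDegree_prod_X_sub_C [CommRing R] [Nontrivial R] (s : Finset ι) (φ : ι → R) :
    (∏ i ∈ s, (X - C (φ i))).natDegree = #s := by
  rw [natDegree_prod_of_monic _ _ fun i _ => monic_X_sub_C (φ i)]
  simp only [natDegree_X_sub_C, sum_const, smul_eq_mul, mul_one]

theorem dvd_mul_derivative_of_splits [Field R] {G E : R[X]} (hG : G.Splits)
    (hE : ∀ c, G.IsRoot c → E.IsRoot c) : G ∣ E * derivative G := by
  classical
  by_cases h0 : E * derivative G = 0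
  · exact h0 ▸ dvd_zero G
  have hG0 : G ≠ 0 := by rintro rfl; simp at h0
  refine hG.dvd_of_roots_le_roots hG0 (Multiset.le_iff_count.mpr fun c => ?_)
  rw [count_roots, count_roots, rootMultiplicity_mul h0]
  by_cases hc : G.IsRoot c
  · have hEc := (rootMultiplicity_pos (left_ne_zero_of_mul h0)).mpr (hE c hc)
    have hG'c := rootMultiplicity_sub_one_le_derivative_rootMultiplicity_of_ne_zero G c
      (right_ne_zero_of_mul h0)
    omega
  · rw [rootMultiplicity_eq_zero hc]
    exact Nat.zero_le _

theorem pow_expChar_pow_of_monic [CommSemiring R] (p e : ℕ) [ExpChar R p] {G : R[X]}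
    (hG : G.Monic) :
    G ^ p ^ e = X ^ (p ^ e * G.natDegree) + G.eraseLead ^ p ^ e := by
  conv_lhs => rw [← G.eraseLead_add_C_mul_X_pow, hG.leadingCoeff, C_1, one_mul]
  rw [add_pow_expChar_pow, ← pow_mul, mul_comm G.natDegree, add_comm]

end Polynomial

section Lacunary

variable {F : Type*} [Field F] [Fintype F]

theorem prod_X_sub_C_eq_X_pow_card_sub_X_iff {φ : F → F} :
    ∏ a, (X - C (φ a)) = X ^ Fintype.card F - X ↔ Function.Injective φ := by
  constructor
  · intro h
    refine Finite.injective_iff_surjective.mpr fun c => ?_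
    have hc : (∏ a, (X - C (φ a))).eval c = 0 := by
      rw [h, eval_sub, eval_pow, eval_X, FiniteField.pow_card, sub_self]
    rw [eval_prod, prod_eq_zero_iff] at hc
    obtain ⟨a, -, ha⟩ := hc
    rw [eval_sub, eval_X, eval_C, sub_eq_zero] at ha
    exact ⟨a, ha.symm⟩
  · intro h
    have hmonic : (X ^ Fintype.card F - X : F[X]).Monic :=
      monic_X_pow_sub (by rw [degree_X]; exact_mod_cast Fintype.one_lt_card)
    have hprod := prod_multiset_X_sub_C_of_monic_of_roots_card_eq hmonic (by
      rw [FiniteField.roots_X_pow_card_sub_X,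
        FiniteField.X_pow_card_sub_X_natDegree_eq F Fintype.one_lt_card, ← card_def, card_univ])
    rw [FiniteField.roots_X_pow_card_sub_X] at hprod
    exact ((Finite.injective_iff_bijective.mp h).prod_comp fun b => X - C b).trans hprod

/-- Every root `c` of `G = X ^ n + g` satisfies `g c ^ p ^ e + c = G c ^ p ^ e = 0`, so that `G`
divides `(g ^ p ^ e + X) * g'`. -/
theorem natDegree_add_one_le_mul_natDegree_eraseLead {p e : ℕ} [Fact p.Prime] [CharP F p]
    {G : F[X]} (hmonic : G.Monic) (hsplits : G.Splits)
    (hq : Fintype.card F = p ^ e * G.natDegree) (hp : p ∣ G.natDegree)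
    (hder : derivative G ≠ 0) (hne : G ^ p ^ e ≠ X ^ Fintype.card F - X) :
    G.natDegree + 1 ≤ (p ^ e + 1) * G.eraseLead.natDegree := by
  set g := G.eraseLead
  have hs : 0 < p ^ e := pow_pos (Fact.out (p := p.Prime)).pos e
  have hG : G ^ p ^ e = X ^ Fintype.card F + g ^ p ^ e :=
    hq ▸ pow_expChar_pow_of_monic p e hmonic
  have hderg : derivative G = derivative g := by
    conv_lhs => rw [← G.eraseLead_add_C_mul_X_pow, derivative_add, derivative_C_mul_X_pow,
      (CharP.cast_eq_zero_iff F p _).mpr hp, mul_zero, C_0, zero_mul, add_zero]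
  rw [hderg] at hder
  have hg' : (derivative g).natDegree < g.natDegree := natDegree_derivative_lt_of_ne_zero hder
  have hE : g ^ p ^ e + X ≠ 0 := fun h => hne <| by
    rw [hG, eq_neg_of_add_eq_zero_left h, ← sub_eq_add_neg]
  have hdvd : G ∣ (g ^ p ^ e + X) * derivative g := by
    rw [← hderg]
    refine dvd_mul_derivative_of_splits hsplits fun c hc => ?_
    have hGc := congrArg (eval c) hG
    rw [eval_pow, hc.eq_zero, zero_pow hs.ne', eval_add, eval_pow, eval_X,
      FiniteField.pow_card] at hGc
    rw [IsRoot, eval_add, eval_X, add_comm, hGc]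
  have hdegE : (g ^ p ^ e + X).natDegree ≤ p ^ e * g.natDegree := by
    refine natDegree_add_le_of_degree_le natDegree_pow_le ?_
    rw [natDegree_X]
    exact Nat.mul_pos hs hg'.pos
  have hdeg := natDegree_le_of_dvd hdvd (mul_ne_zero hE hder)
  rw [natDegree_mul hE hder] at hdeg
  rw [add_one_mul]
  omega

theorem exists_coeff_prod_X_sub_C_ne_zero [DecidableEq F] {p e : ℕ} [Fact p.Prime] [CharP F p]
    (hq : p ^ (e + 1) ∣ Fintype.card F) {φ : F → F} (hφ : ¬ Function.Injective φ)
    (hdvd : ∀ b, p ^ e ∣ #{a | φ a = b}) {b : F} (hb : ¬ p ^ (e + 1) ∣ #{a | φ a = b}) :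
    ∃ k < Fintype.card F, Fintype.card F + p ^ e ≤ (p ^ e + 1) * k ∧
      (∏ a, (X - C (φ a))).coeff k ≠ 0 := by
  have hs : 0 < p ^ e := pow_pos (Fact.out (p := p.Prime)).pos e
  set G : F[X] := ∏ b ∈ univ.image φ, (X - C b) ^ (#{a | φ a = b} / p ^ e)
  have hpow : ∏ a, (X - C (φ a)) = G ^ p ^ e := prod_X_sub_C_eq_pow_of_dvd_card_fiber univ φ hdvd
  have hmonic : G.Monic := monic_prod_of_monic _ _ fun b _ => (monic_X_sub_C b).pow _
  have hsplits : G.Splits := Splits.prod fun b _ => (Splits.X_sub_C b).pow _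
  have hcard : Fintype.card F = p ^ e * G.natDegree := by
    rw [← hmonic.natDegree_pow, ← hpow, natDegree_prod_X_sub_C, card_univ]
  have hpn : p ∣ G.natDegree := by
    rwa [hcard, pow_succ, Nat.mul_dvd_mul_iff_left hs] at hq
  have hder : derivative G ≠ 0 := by
    refine derivative_ne_zero_of_cast_rootMultiplicity_ne_zero (t := b) ?_
    rw [Ne, CharP.cast_eq_zero_iff F p, ← Nat.mul_dvd_mul_iff_left hs, ← pow_succ]
    rwa [← rootMultiplicity_prod_X_sub_C, hpow, ← count_roots, roots_pow, Multiset.count_nsmul,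
      count_roots] at hb
  have hne : G ^ p ^ e ≠ X ^ Fintype.card F - X := fun h =>
    hφ (prod_X_sub_C_eq_X_pow_card_sub_X_iff.mp (hpow.trans h))
  have hn : G.natDegree ≠ 0 := fun h => by simp [h] at hcard
  have hw : G.natDegree + 1 ≤ (p ^ e + 1) * G.eraseLead.natDegree :=
    natDegree_add_one_le_mul_natDegree_eraseLead hmonic hsplits hcard hpn hder hne
  have hlt : p ^ e * G.eraseLead.natDegree < Fintype.card F := by
    have := eraseLead_natDegree_le G
    rw [hcard]
    exact Nat.mul_lt_mul_of_pos_left (by omega) hs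
  refine ⟨p ^ e * G.eraseLead.natDegree, hlt, ?_, ?_⟩
  · rw [hcard]
    linarith [Nat.mul_le_mul_left (p ^ e) hw]
  · rw [hpow, pow_expChar_pow_of_monic p e hmonic, ← hcard, coeff_add, coeff_X_pow, if_neg hlt.ne,
      zero_add, coeff_pow_mul_natDegree]
    refine pow_ne_zero _ (leadingCoeff_ne_zero.mpr fun h => ?_)
    rw [h, natDegree_zero] at hw
    omega

end Lacunary

section Redei

variable {R : Type*} [CommRing R]

/-- The intercept of the line of slope `m` through the point `(a, f a)` of the graph of `f`. Two
points of the graph lie on a common line of slope `m` if and only if they have the same value of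
`intercept f m`. -/
def intercept (f : R → R) (m a : R) : R := f a - m * a

theorem intercept_slope_eq {F : Type*} [Field F] {f : F → F} {x y : F} (hxy : x ≠ y) :
    intercept f ((f x - f y) / (x - y)) x = intercept f ((f x - f y) / (x - y)) y := by
  have := sub_ne_zero.mpr hxy
  unfold intercept
  field_simp
  ring

variable [Fintype R]

/-- The Rédei polynomial `∏ (X + a * Y - f a)` of the graph of `f`, as a polynomial in `X` whose
coefficients are polynomials in `Y`. -/
noncomputable def redeiPolynomial (f : R → R) : R[X][X] :=
  ∏ a, (X + C (C a * X - C (f a)))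

theorem monic_redeiPolynomial (f : R → R) : (redeiPolynomial f).Monic :=
  monic_prod_of_monic _ _ fun _ _ => monic_X_add_C _

theorem natDegree_redeiPolynomial [Nontrivial R] (f : R → R) :
    (redeiPolynomial f).natDegree = Fintype.card R := by
  rw [redeiPolynomial, natDegree_prod_of_monic _ _ fun _ _ => monic_X_add_C _]
  simp only [natDegree_X_add_C, sum_const, card_univ, smul_eq_mul, mul_one]

theorem map_evalRingHom_redeiPolynomial (f : R → R) (m : R) :
    (redeiPolynomial f).map (evalRingHom m) = ∏ a, (X - C (intercept f m a)) := by
  rw [redeiPolynomial, Polynomial.map_prod]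
  refine prod_congr rfl fun a _ => ?_
  rw [Polynomial.map_add, map_X, map_C, coe_evalRingHom, eval_sub, eval_mul, eval_C, eval_C,
    eval_X, intercept, mul_comm, ← neg_sub (f a), C_neg, ← sub_eq_add_neg]

theorem eval_coeff_redeiPolynomial (f : R → R) (m : R) (k : ℕ) :
    ((redeiPolynomial f).coeff k).eval m = (∏ a, (X - C (intercept f m a))).coeff k := by
  rw [← map_evalRingHom_redeiPolynomial, coeff_map, coe_evalRingHom]

theorem taylor_coeff_redeiPolynomial (f : R → R) (m : R) (k : ℕ) :
    taylor m ((redeiPolynomial f).coeff k) = (redeiPolynomial (intercept f m)).coeff k := by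
  have hmap : (redeiPolynomial f).map (taylorAlgHom m : R[X] →+* R[X]) =
      redeiPolynomial (intercept f m) := by
    rw [redeiPolynomial, redeiPolynomial, Polynomial.map_prod]
    refine prod_congr rfl fun a _ => ?_
    rw [Polynomial.map_add, map_X, map_C, RingHom.coe_coe, taylorAlgHom_apply, map_sub, taylor_mul,
      taylor_C, taylor_C, taylor_X, intercept, C_sub (a := f a), C_mul (a := m)]
    ring_nf
  rw [← hmap, coeff_map, RingHom.coe_coe, taylorAlgHom_apply]

theorem coeff_redeiPolynomial_eq_sum (f : R → R) {k : ℕ} (hk : k ≤ Fintype.card R) :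
    (redeiPolynomial f).coeff k =
      ∑ t ∈ powersetCard (Fintype.card R - k) univ, ∏ a ∈ t, (C a * X - C (f a)) := by
  rw [redeiPolynomial, prod_X_add_C_coeff _ _ (by rwa [card_univ]), card_univ]

theorem natDegree_coeff_redeiPolynomial_le (f : R → R) {k : ℕ} (hk : k ≤ Fintype.card R) :
    ((redeiPolynomial f).coeff k).natDegree ≤ Fintype.card R - k := by
  rw [coeff_redeiPolynomial_eq_sum f hk]
  refine natDegree_sum_le_of_forall_le _ _ fun t ht => ?_
  rw [← (mem_powersetCard.mp ht).2, card_eq_sum_ones]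
  exact (natDegree_prod_le _ _).trans (sum_le_sum fun a _ => natDegree_C_mul_X_sub_C_le a (f a))

theorem coeff_card_sub_coeff_redeiPolynomial (f : R → R) {k : ℕ} (hk : k ≤ Fintype.card R) :
    ((redeiPolynomial f).coeff k).coeff (Fintype.card R - k) = (∏ a : R, (X + C a)).coeff k := by
  rw [coeff_redeiPolynomial_eq_sum f hk, finsetSum_coeff,
    prod_X_add_C_coeff _ _ (by rwa [card_univ]), card_univ]
  refine sum_congr rfl fun t ht => ?_
  have hcoeff := coeff_prod_of_natDegree_le t (fun a => C a * X - C (f a)) 1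
    fun a _ => natDegree_C_mul_X_sub_C_le a (f a)
  rw [(mem_powersetCard.mp ht).2, mul_one] at hcoeff
  simp only [hcoeff, coeff_sub, coeff_C_mul, coeff_X_one, mul_one, coeff_C_succ, sub_zero]

theorem natDegree_coeff_redeiPolynomial_lt {F : Type*} [Field F] [Fintype F] (f : F → F)
    {k : ℕ} (hk : 2 ≤ k) (hkq : k < Fintype.card F) :
    ((redeiPolynomial f).coeff k).natDegree < Fintype.card F - k := by
  have hprod : ∏ a : F, (X + C a) = X ^ Fintype.card F - X := by
    rw [← prod_X_sub_C_eq_X_pow_card_sub_X_iff.mpr neg_injective]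
    simp only [C_neg, sub_neg_eq_add]
  have hcoeff := coeff_card_sub_coeff_redeiPolynomial f hkq.le
  rw [hprod, coeff_sub, coeff_X_pow, coeff_X, if_neg hkq.ne, if_neg (by omega), sub_zero] at hcoeff
  refine (natDegree_coeff_redeiPolynomial_le f hkq.le).lt_of_ne fun hdeg => ?_
  rw [← hdeg, coeff_natDegree, leadingCoeff_eq_zero] at hcoeff
  rw [hcoeff, natDegree_zero] at hdeg
  omega

theorem swap_redeiPolynomial (f : R → R) :
    Bivariate.swap (redeiPolynomial f) = ∏ a, (C (X - C (f a)) + C (C a) * X) := by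
  rw [redeiPolynomial, map_prod]
  refine prod_congr rfl fun a _ => ?_
  rw [C_sub, C_mul, map_add, map_sub, map_mul, Bivariate.swap_Y, Bivariate.swap_X,
    Bivariate.swap_C_C, Bivariate.swap_C_C, C_sub]
  ring

theorem coeff_swap_redeiPolynomial_eq_zero [IsDomain R] [DecidableEq R] (f : R → R) {j : ℕ}
    (hj : ((Bivariate.swap (redeiPolynomial f)).coeff j).natDegree + j * #(univ.image f) <
      Fintype.card R) :
    (Bivariate.swap (redeiPolynomial f)).coeff j = 0 := by
  set Q := (Bivariate.swap (redeiPolynomial f)).coeff j with hQ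
  set V : R[X] := ∏ b ∈ univ.image f, (X - C b) with hV
  have hdvd : ∏ a, (X - C (f a)) ∣ Q * V ^ j := by
    rw [hQ, swap_redeiPolynomial]
    exact prod_dvd_coeff_prod_mul_pow _ _ _
      (fun a ha => dvd_prod_of_mem (fun b => X - C b) (mem_image_of_mem f ha)) j
  by_contra hQ0
  have hVj : V ^ j ≠ 0 := pow_ne_zero _ (prod_ne_zero_iff.mpr fun b _ => X_sub_C_ne_zero b)
  have hdeg := natDegree_le_of_dvd hdvd (mul_ne_zero hQ0 hVj)
  rw [natDegree_prod_X_sub_C, card_univ, natDegree_mul hQ0 hVj, natDegree_pow, hV,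
    natDegree_prod_X_sub_C] at hdeg
  omega

end Redei

section Directions

variable {F : Type*} [Field F] [Fintype F] [DecidableEq F] (f : F → F)

/-- The directions determined by the graph of `f`: the slopes `m` for which some line of slope `m`
contains two points of the graph. -/
def directions : Finset F := {m | ¬ Function.Injective (intercept f m)}

/-- Every line whose direction is determined by the graph of `f` meets the graph in a multiple of
`s` points. Lines are given by their slope `m` and intercept `b`; those that miss the graph satisfy
the condition trivially. -/
def IsLineDivisor (s : ℕ) : Prop :=
  ∀ m ∈ directions f, ∀ b, s ∣ #{a | intercept f m a = b}

variable {f}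

theorem mem_directions {m : F} : m ∈ directions f ↔ ¬ Function.Injective (intercept f m) := by
  simp only [directions, mem_filter_univ]

theorem mem_directions_iff_exists {m : F} :
    m ∈ directions f ↔ ∃ x y, x ≠ y ∧ f x - f y = m * (x - y) := by
  have hline (x y : F) : intercept f m x = intercept f m y ↔ f x - f y = m * (x - y) := by
    unfold intercept
    constructor <;> intro h <;> linear_combination h
  simp only [mem_directions, Function.Injective, hline, not_forall, exists_prop, and_comm]

theorem slope_mem_directions {x y : F} (hxy : x ≠ y) :
    (f x - f y) / (x - y) ∈ directions f :=
  mem_directions.mpr fun hinj => hxy (hinj (intercept_slope_eq hxy))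

variable (f) in
theorem directions_nonempty : (directions f).Nonempty :=
  ⟨_, slope_mem_directions one_ne_zero⟩

namespace IsLineDivisor

variable {s : ℕ}

theorem mono {r : ℕ} (h : IsLineDivisor f s) (hrs : r ∣ s) : IsLineDivisor f r :=
  fun m hm b => hrs.trans (h m hm b)

theorem le_card_fiber (h : IsLineDivisor f s) {m : F} (hm : m ∈ directions f) (x : F) :
    s ≤ #{a | intercept f m a = intercept f m x} :=
  Nat.le_of_dvd (card_pos.mpr ⟨x, by simp only [mem_filter_univ]⟩) (h m hm _)

theorem mul_card_image_le (h : IsLineDivisor f s) {m : F} (hm : m ∈ directions f) :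
    s * #(univ.image (intercept f m)) ≤ Fintype.card F :=
  mul_card_image_le_card univ s <| forall_mem_image.mpr fun x _ => h.le_card_fiber hm x

/-- The lines through the point `(0, f 0)` in the determined directions share no other point. -/
theorem card_directions_mul_le (h : IsLineDivisor f s) :
    #(directions f) * (s - 1) ≤ Fintype.card F - 1 := by
  set T : F → Finset F := fun m => ({a | intercept f m a = intercept f m 0} : Finset F).erase 0
  have hdisj : (directions f : Set F).PairwiseDisjoint T := by
    refine fun m _ m' _ hmm => disjoint_left.mpr fun a ha ha' => hmm ?_
    simp only [T, mem_erase, mem_filter_univ] at ha ha'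
    unfold intercept at ha ha'
    exact mul_right_cancel₀ ha.1 (by linear_combination ha'.2 - ha.2)
  calc #(directions f) * (s - 1) ≤ ∑ m ∈ directions f, #(T m) := by
        refine card_nsmul_le_sum _ _ _ fun m hm => ?_
        rw [card_erase_of_mem (by simp only [mem_filter_univ])]
        exact Nat.sub_le_sub_right (h.le_card_fiber hm 0) 1
    _ = #((directions f).biUnion T) := (card_biUnion hdisj).symm
    _ ≤ #(univ.erase (0 : F)) :=
        card_le_card (biUnion_subset.mpr fun m _ => erase_subset_erase 0 (subset_univ _))
    _ = Fintype.card F - 1 := card_erase_of_mem (mem_univ 0)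

theorem card_directions_le_div (h : IsLineDivisor f s) (hs : 1 < s) :
    (#(directions f) : ℚ) ≤ ((Fintype.card F : ℚ) - 1) / ((s : ℚ) - 1) := by
  rw [le_div_iff₀ (sub_pos.mpr (by exact_mod_cast hs)), ← Nat.cast_pred (pos_of_gt hs),
    ← Nat.cast_pred Fintype.card_pos]
  exact_mod_cast h.card_directions_mul_le

end IsLineDivisor

theorem isLineDivisor_card_iff :
    IsLineDivisor f (Fintype.card F) ↔ #(directions f) = 1 := by
  constructor
  · intro h
    have hpos : 0 < Fintype.card F - 1 := Nat.sub_pos_of_lt Fintype.one_lt_card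
    refine le_antisymm (Nat.le_of_mul_le_mul_right ?_ hpos) (directions_nonempty f).card_pos
    rw [one_mul]
    exact h.card_directions_mul_le
  · intro hone m hm b
    have hslope {x y : F} (hxy : x ≠ y) : (f x - f y) / (x - y) = m :=
      card_le_one.mp hone.le _ (slope_mem_directions hxy) _ hm
    have hconst (x y : F) : intercept f m x = intercept f m y := by
      rcases eq_or_ne x y with rfl | hxy
      · rfl
      · exact hslope hxy ▸ intercept_slope_eq hxy
    by_cases hb : intercept f m 0 = b
    · rw [filter_true_of_mem fun a _ => (hconst a 0).trans hb, card_univ]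
    · rw [filter_false_of_mem fun a _ ha => hb ((hconst 0 a).trans ha), card_empty]
      exact dvd_zero _

theorem eval_coeff_redeiPolynomial_of_notMem_directions {y : F} (hy : y ∉ directions f) {k : ℕ}
    (hk : 2 ≤ k) (hkq : k ≠ Fintype.card F) : ((redeiPolynomial f).coeff k).eval y = 0 := by
  rw [eval_coeff_redeiPolynomial,
    prod_X_sub_C_eq_X_pow_card_sub_X_iff.mpr (not_not.mp (mt mem_directions.mpr hy)), coeff_sub,
    coeff_X_pow, coeff_X, if_neg hkq, if_neg (by omega), sub_zero]

theorem coeff_redeiPolynomial_eq_zero {k : ℕ} (hk : 2 ≤ k) (hkq : k ≠ Fintype.card F)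
    (hkN : #(directions f) ≤ k) : (redeiPolynomial f).coeff k = 0 := by
  rcases hkq.lt_or_gt with hlt | hgt
  · refine eq_zero_of_natDegree_lt_card_of_eval_eq_zero' _ (directions f)ᶜ
      (fun y hy => eval_coeff_redeiPolynomial_of_notMem_directions (mem_compl.mp hy) hk hkq) ?_
    have := natDegree_coeff_redeiPolynomial_lt f hk hlt
    rw [card_compl]
    omega
  · exact coeff_eq_zero_of_natDegree_lt (by rwa [natDegree_redeiPolynomial])

theorem coeff_taylor_coeff_redeiPolynomial_eq_zero (hN : 2 ≤ #(directions f)) {m : F} {j : ℕ}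
    (hj : j ≠ 0)
    (hjN : j * #(univ.image (intercept f m)) + #(directions f) ≤ Fintype.card F) (k : ℕ) :
    (taylor m ((redeiPolynomial f).coeff k)).coeff j = 0 := by
  rw [taylor_coeff_redeiPolynomial, ← coeff_coeff_swap]
  set Q := (Bivariate.swap (redeiPolynomial (intercept f m))).coeff j with hQ
  have hdeg : Q.natDegree ≤ #(directions f) - 1 := by
    refine natDegree_le_iff_coeff_eq_zero.mpr fun i hi => ?_
    rw [hQ, coeff_coeff_swap, ← taylor_coeff_redeiPolynomial]
    by_cases hiq : i = Fintype.card F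
    · rw [hiq, ← natDegree_redeiPolynomial f, (monic_redeiPolynomial f).coeff_natDegree,
        taylor_one, coeff_C_of_ne_zero hj]
    · rw [coeff_redeiPolynomial_eq_zero (by omega) hiq (by omega), map_zero, coeff_zero]
  rw [hQ, coeff_swap_redeiPolynomial_eq_zero (intercept f m) (by rw [← hQ]; omega),
    coeff_zero]

namespace IsLineDivisor

variable {s : ℕ}

theorem X_sub_C_pow_dvd_derivative_coeff (h : IsLineDivisor f s) (hs : (s : F) = 0)
    (hN : 2 ≤ #(directions f)) (hsN : s * #(directions f) ≤ Fintype.card F) {m : F}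
    (hm : m ∈ directions f) (k : ℕ) :
    (X - C m) ^ s ∣ derivative ((redeiPolynomial f).coeff k) := by
  refine X_sub_C_pow_dvd_derivative hs fun j hj hjs =>
    coeff_taylor_coeff_redeiPolynomial_eq_zero hN hj (le_of_mul_le_mul_left ?_ (by omega : 0 < s)) k
  set i := #(univ.image (intercept f m))
  calc s * (j * i + #(directions f)) = j * (s * i) + s * #(directions f) := by ring
    _ ≤ j * Fintype.card F + Fintype.card F := by gcongr; exact h.mul_card_image_le hm
    _ = (j + 1) * Fintype.card F := by ring
    _ ≤ s * Fintype.card F := Nat.mul_le_mul_right _ hjs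

theorem derivative_coeff_redeiPolynomial_eq_zero (h : IsLineDivisor f s) (hs : (s : F) = 0)
    (hN : 2 ≤ #(directions f)) (hsN : s * #(directions f) ≤ Fintype.card F) {k : ℕ} (hk : 2 ≤ k)
    (hkq : k < Fintype.card F) (hsk : Fintype.card F + s ≤ (s + 1) * k) :
    derivative ((redeiPolynomial f).coeff k) = 0 := by
  rcases le_or_gt #(directions f) k with hkN | hkN
  · rw [coeff_redeiPolynomial_eq_zero hk hkq.ne hkN, derivative_zero]
  by_contra hder
  have hdeg := mul_card_le_natDegree_of_pow_dvd hder (directions f) fun m hm =>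
    h.X_sub_C_pow_dvd_derivative_coeff hs hN hsN hm k
  have hder_lt := natDegree_derivative_lt_of_ne_zero hder
  have hlt := natDegree_coeff_redeiPolynomial_lt f hk hkq
  have hsk' : s * (k + 1) ≤ s * #(directions f) := Nat.mul_le_mul_left s hkN
  rw [mul_add_one] at hsk'
  rw [add_one_mul] at hsk
  omega

theorem coeff_redeiPolynomial_eq_zero (h : IsLineDivisor f s) (hs : (s : F) = 0) (hs2 : 2 ≤ s)
    (hN : 2 ≤ #(directions f)) (hsN : s * #(directions f) ≤ Fintype.card F) {k : ℕ} (hk : 2 ≤ k)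
    (hkq : k < Fintype.card F) (hsk : Fintype.card F + s ≤ (s + 1) * k) :
    (redeiPolynomial f).coeff k = 0 := by
  by_contra h0
  have hder := h.derivative_coeff_redeiPolynomial_eq_zero hs hN hsN hk hkq hsk
  have hdeg := mul_card_le_natDegree_of_pow_dvd (r := 2) h0 (directions f)ᶜ fun y hy => by
    rw [← le_rootMultiplicity_iff h0]
    refine (one_lt_rootMultiplicity_iff_isRoot h0).mpr ⟨?_, by rw [hder]; exact eval_zero⟩
    exact eval_coeff_redeiPolynomial_of_notMem_directions (mem_compl.mp hy) hk hkq.ne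
  have hlt := natDegree_coeff_redeiPolynomial_lt f hk hkq
  have hN' : 2 * #(directions f) ≤ s * #(directions f) := Nat.mul_le_mul_right _ hs2
  rw [card_compl] at hdeg
  omega

variable {p e : ℕ} [Fact p.Prime] [CharP F p]

theorem exists_coeff_redeiPolynomial_ne_zero (h : IsLineDivisor f (p ^ e))
    (hmax : ¬ IsLineDivisor f (p ^ (e + 1))) (hq : p ^ (e + 1) ∣ Fintype.card F) :
    ∃ k < Fintype.card F, Fintype.card F + p ^ e ≤ (p ^ e + 1) * k ∧
      (redeiPolynomial f).coeff k ≠ 0 := by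
  unfold IsLineDivisor at hmax
  push Not at hmax
  obtain ⟨m, hm, b, hb⟩ := hmax
  obtain ⟨k, hkq, hk, hcoeff⟩ :=
    exists_coeff_prod_X_sub_C_ne_zero hq (mem_directions.mp hm) (h m hm) hb
  refine ⟨k, hkq, hk, fun h0 => hcoeff ?_⟩
  rw [← eval_coeff_redeiPolynomial, h0, eval_zero]

theorem card_add_le_mul_card_directions (he : e ≠ 0) (h : IsLineDivisor f (p ^ e))
    (hmax : ¬ IsLineDivisor f (p ^ (e + 1))) (hq : p ^ (e + 1) ∣ Fintype.card F) :
    Fintype.card F + p ^ e ≤ p ^ e * #(directions f) := by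
  have hs2 : 2 ≤ p ^ e := Nat.one_lt_pow he (Fact.out (p := p.Prime)).one_lt
  have hs0 : ((p ^ e : ℕ) : F) = 0 := (CharP.cast_eq_zero_iff F p _).mpr (dvd_pow_self p he)
  have hN : 2 ≤ #(directions f) := by
    have hone : #(directions f) ≠ 1 := fun hone => hmax ((isLineDivisor_card_iff.mpr hone).mono hq)
    have := (directions_nonempty f).card_pos
    omega
  obtain ⟨k, hkq, hk, hne⟩ := h.exists_coeff_redeiPolynomial_ne_zero hmax hq
  have hk2 : 2 ≤ k := by
    by_contra hlt
    have := Fintype.one_lt_card (α := F)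
    have : (p ^ e + 1) * k ≤ (p ^ e + 1) * 1 := Nat.mul_le_mul_left _ (by omega)
    omega
  have hlt : Fintype.card F < p ^ e * #(directions f) := not_le.mp fun hsN =>
    hne (h.coeff_redeiPolynomial_eq_zero hs0 hs2 hN hsN hk2 hkq hk)
  obtain ⟨n, hn⟩ := (pow_dvd_pow p e.le_succ).trans hq
  rw [hn] at hlt ⊢
  rw [← mul_add_one]
  exact Nat.mul_le_mul_left _ (Nat.lt_of_mul_lt_mul_left hlt)

end IsLineDivisor

theorem card_add_three_le_two_mul_card_directions {p : ℕ} [Fact p.Prime] [CharP F p]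
    (hmax : ¬ IsLineDivisor f p) : Fintype.card F + 3 ≤ 2 * #(directions f) := by
  have hone : IsLineDivisor f (p ^ 0) := fun _ _ _ => by rw [pow_zero]; exact one_dvd _
  have hpq : p ∣ Fintype.card F :=
    (CharP.cast_eq_zero_iff F p _).mp (FiniteField.cast_card_eq_zero F)
  obtain ⟨k, hkq, hk, hne⟩ := hone.exists_coeff_redeiPolynomial_ne_zero
    (by rwa [zero_add, pow_one]) (by rwa [zero_add, pow_one])
  rw [pow_zero] at hk
  have hkN : k < #(directions f) := not_le.mp fun hle =>
    hne (coeff_redeiPolynomial_eq_zero (by have := Fintype.one_lt_card (α := F); omega) hkq.ne hle)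
  omega

theorem isLineDivisor_iff {s : ℕ} :
    IsLineDivisor f s ↔
      ∀ m ∈ directions f, ∀ x, s ∣ {y : F | f y - f x = m * (y - x)}.ncard := by
  have hline (m x : F) : {y : F | f y - f x = m * (y - x)}.ncard =
      #{a | intercept f m a = intercept f m x} := by
    rw [← Set.ncard_coe_finset]
    congr 1
    ext y
    simp only [Set.mem_ofPred_eq, mem_coe, mem_filter_univ]
    unfold intercept
    constructor <;> intro h <;> linear_combination h
  simp only [hline]
  refine ⟨fun h m hm x => h m hm _, fun h m hm b => ?_⟩
  by_cases hb : ∃ x, intercept f m x = b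
  · obtain ⟨x, rfl⟩ := hb
    exact h m hm x
  · rw [filter_false_of_mem fun a _ ha => hb ⟨a, ha⟩, card_empty]
    exact dvd_zero s

end Directions

/-- Let `f : GF(q) → GF(q)`, `q = p^h`, let `U = {(x, f x)}` be its graph and `N` the number of
directions determined by `U` (the graph never determines the vertical direction `(∞)`, so the
determined directions form a subset `D ⊆ GF(q)`).  Let `s = p^e` be maximal such that every
line whose direction is determined by `U` and which is incident with a point of `U` is incident
with a multiple of `s` points of `U`.  Then one of the following holds:
(1) `s = 1` and `(q+3)/2 ≤ N ≤ q + 1`;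
(2) `q/s + 1 ≤ N ≤ (q − 1)/(s − 1)`;
(3) `s = q` and `N = 1`.

Here the line with direction `m ∈ GF(q)` through the point `(x, f x)` of the graph meets the
graph exactly in the points `(y, f y)` with `f y − f x = m·(y − x)`. -/
theorem stmt_5 {F : Type*} [Field F] [Fintype F] (p hh q : ℕ) (hp : p.Prime) (hq : q = p ^ hh)
    (hcard : Fintype.card F = q)
    (f : F → F)
    (D : Set F) (hD : D = {m : F | ∃ x y : F, x ≠ y ∧ f x - f y = m * (x - y)})
    (N : ℕ) (hN : N = D.ncard)
    (s e : ℕ) (hs : s = p ^ e)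
    (hdiv : ∀ m ∈ D, ∀ x : F, s ∣ {y : F | f y - f x = m * (y - x)}.ncard)
    (hmax : ∀ e' : ℕ, (∀ m ∈ D, ∀ x : F, p ^ e' ∣ {y : F | f y - f x = m * (y - x)}.ncard) →
      p ^ e' ≤ s) :
    (s = 1 ∧ ((q : ℚ) + 3) / 2 ≤ N ∧ N ≤ q + 1) ∨
    ((q : ℚ) / s + 1 ≤ N ∧ (N : ℚ) ≤ ((q : ℚ) - 1) / ((s : ℚ) - 1)) ∨
    (s = q ∧ N = 1) := by
  classical
  have := Fact.mk hp
  have : CharP F p := charP_of_card_eq_prime_pow (f := hh) (by rw [hcard, hq])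
  obtain rfl : D = directions f := hD.trans (Set.ext fun m => mem_directions_iff_exists.symm)
  simp only [mem_coe, ← isLineDivisor_iff] at hdiv hmax
  rw [Set.ncard_coe_finset] at hN
  subst hs hN
  obtain ⟨m, hm⟩ := directions_nonempty f
  have heh : e ≤ hh := (Nat.pow_le_pow_iff_right hp.one_lt).mp <|
    hq ▸ hcard ▸ (hdiv.le_card_fiber hm 0).trans (card_le_univ _)
  rcases heh.eq_or_lt with rfl | hlt
  · exact .inr (.inr ⟨hq.symm, isLineDivisor_card_iff.mp (by rwa [hcard, hq])⟩)
  have hmax' : ¬ IsLineDivisor f (p ^ (e + 1)) := fun h =>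
    (hmax _ h).not_gt (Nat.pow_lt_pow_succ hp.one_lt)
  rcases eq_or_ne e 0 with rfl | he
  · have hN := card_add_three_le_two_mul_card_directions (by rwa [zero_add, pow_one] at hmax')
    refine .inl ⟨pow_zero p, ?_, (card_le_univ _).trans (by rw [hcard]; exact q.le_succ)⟩
    rw [div_le_iff₀' two_pos, ← hcard]
    exact_mod_cast hN
  · have hle := hdiv.card_add_le_mul_card_directions he hmax' (hcard ▸ hq ▸ pow_dvd_pow p hlt)
    have hs := Nat.one_lt_pow he hp.one_lt
    have hs0 : (0 : ℚ) < (p ^ e : ℕ) := by exact_mod_cast pos_of_gt hs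
    refine .inr (.inl ⟨?_, hcard ▸ hdiv.card_directions_le_div hs⟩)
    rw [div_add_one hs0.ne', div_le_iff₀' hs0, ← hcard]
    exact_mod_cast hle
end
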